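/- arXiv:1408.1742 — 5 statements merged into one kernel-verified Lean document; each statement's English description precedes it below -/
import Mathlib

section
/- For every dimension s ≥ 1 and every δ ∈ (0,1], there exists a finite set Γ of points in [0,1]^s with cardinality |Γ| ≤ (2e)^s (δ^{-1}+1)^s such that for every t ∈ [0,1]^s there exist x, y ∈ Γ with [0,x] ⊆ [0,t] ⊆ [0,y] and λ([0,y] \ [0,x]) ≤ δ, where λ denotes Lebesgue measure. (In other words, the anchored boxes {[0,x] : x ∈ Γ} form a δ-cover of the family of all anchored boxes [0,t] ⊆ [0,1]^s.) -/
open MeasureTheory Set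

lemma brackets_aux (s : ℕ) : ∀ j : ℕ, ∃ G : Finset ((Fin s → ℝ) × (Fin s → ℝ)),
    G.card ≤ (j + s).choose s ∧
    (∀ p ∈ G, 0 ≤ p.1 ∧ p.1 ≤ p.2 ∧ p.2 ≤ 1 ∧
      ∏ i, p.2 i - ∏ i, p.1 i ≤ (s : ℝ) / ((j : ℝ) + 1)) ∧
    ∀ t ∈ Icc (0 : Fin s → ℝ) 1, ∃ p ∈ G, p.1 ≤ t ∧ t ≤ p.2 := by
  classical
  induction s with
  | zero =>
    intro j
    refine ⟨{(0, 0)}, by simp, ?_, ?_⟩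
    · intro p hp
      refine ⟨fun i => i.elim0, fun i => i.elim0, fun i => i.elim0, by simp⟩
    · intro t ht
      exact ⟨(0, 0), by simp, fun i => i.elim0, fun i => i.elim0⟩
  | succ s ih =>
    choose G hG1 hG2 hG3 using ih
    intro j
    have hj : (0 : ℝ) < (j : ℝ) + 1 := by positivity
    refine ⟨(Finset.range (j + 1)).biUnion (fun k => (G k).image (fun p =>
      ((Fin.cons ((k : ℝ) / (j + 1)) p.1 : Fin (s + 1) → ℝ),
       (Fin.cons (((k : ℝ) + 1) / (j + 1)) p.2 : Fin (s + 1) → ℝ)))), ?_, ?_, ?_⟩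
    · calc _ ≤ ∑ k ∈ Finset.range (j + 1), (k + s).choose s :=
            Finset.card_biUnion_le.trans
              (Finset.sum_le_sum fun k _ => Finset.card_image_le.trans (hG1 k))
        _ = _ := by rw [Nat.sum_range_add_choose]; rfl
    · intro p hp
      simp only [Finset.mem_biUnion, Finset.mem_range, Finset.mem_image] at hp
      obtain ⟨k, hk, q, hq, rfl⟩ := hp
      obtain ⟨h0, h1, h2, h3⟩ := hG2 k q hq
      have hk' : (k : ℝ) + 1 ≤ j + 1 := by exact_mod_cast hk
      have hk0 : (0 : ℝ) < (k : ℝ) + 1 := by positivity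
      refine ⟨?_, ?_, ?_, ?_⟩
      · intro i
        refine Fin.cases ?_ (fun i => ?_) i
        · simp only [Fin.cons_zero, Pi.zero_apply]; positivity
        · simpa using h0 i
      · intro i
        refine Fin.cases ?_ (fun i => ?_) i
        · simp only [Fin.cons_zero]; gcongr; linarith
        · simpa using h1 i
      · intro i
        refine Fin.cases ?_ (fun i => ?_) i
        · simp only [Fin.cons_zero, Pi.one_apply]; rw [div_le_one hj]; exact hk'
        · simpa using h2 i
      · simp only [Fin.prod_univ_succ, Fin.cons_zero, Fin.cons_succ]
        have hX : ∏ i, q.1 i ≤ 1 :=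
          Finset.prod_le_one (fun i _ => h0 i) (fun i _ => (h1 i).trans (h2 i))
        set X := ∏ i, q.1 i
        set Y := ∏ i, q.2 i
        rw [le_div_iff₀ hk0] at h3
        rw [le_div_iff₀ hj]
        have : (((k : ℝ) + 1) / (j + 1) * Y - (k : ℝ) / (j + 1) * X) * ((j : ℝ) + 1)
            = (k + 1) * Y - k * X := by field_simp
        rw [this]
        push_cast
        linarith
    · intro t ht
      have ht0 : 0 ≤ t 0 := ht.1 0
      have ht1 : t 0 ≤ 1 := ht.2 0
      have key : ∃ k : ℕ, k ≤ j ∧ (k : ℝ) ≤ t 0 * (j + 1) ∧ t 0 * (j + 1) ≤ k + 1 := by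
        by_cases h : t 0 = 1
        · exact ⟨j, le_rfl, by rw [h]; linarith, by rw [h]; linarith⟩
        · have h' : t 0 < 1 := lt_of_le_of_ne ht1 h
          refine ⟨⌊t 0 * (j + 1)⌋₊, ?_, Nat.floor_le (by positivity),
            (Nat.lt_floor_add_one _).le⟩
          have : ⌊t 0 * ((j : ℝ) + 1)⌋₊ < j + 1 := by
            rw [Nat.floor_lt (by positivity)]
            push_cast
            nlinarith
          omega
      obtain ⟨k, hk, hk1, hk2⟩ := key
      obtain ⟨p, hp, hp1, hp2⟩ := hG3 k (fun i => t i.succ)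
        ⟨fun i => ht.1 i.succ, fun i => ht.2 i.succ⟩
      refine ⟨_, Finset.mem_biUnion.2 ⟨k, Finset.mem_range.2 (by omega),
        Finset.mem_image_of_mem _ hp⟩, ?_, ?_⟩
      · intro i
        refine Fin.cases ?_ (fun i => ?_) i
        · simp only [Fin.cons_zero]; rwa [div_le_iff₀ hj]
        · simpa using hp1 i
      · intro i
        refine Fin.cases ?_ (fun i => ?_) i
        · simp only [Fin.cons_zero]; rwa [le_div_iff₀ hj]
        · simpa using hp2 i

/-- **δ-cover of anchored boxes.** For every dimension `s ≥ 1` and every `δ ∈ (0,1]` there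
exists a finite set `Γ` of points of `[0,1]^s` with `|Γ| ≤ (2e)^s (δ⁻¹+1)^s` such that for
every `t ∈ [0,1]^s` there are `x, y ∈ Γ` with `[0,x] ⊆ [0,t] ⊆ [0,y]` and
`λ([0,y] \ [0,x]) ≤ δ`. -/
theorem delta_cover_of_anchored_boxes (s : ℕ) (hs : 1 ≤ s) (δ : ℝ) (hδ : δ ∈ Set.Ioc (0:ℝ) 1) :
    ∃ Γ : Finset (Fin s → ℝ),
      (∀ x ∈ Γ, x ∈ Icc (0 : Fin s → ℝ) 1) ∧
      (Γ.card : ℝ) ≤ (2 * Real.exp 1) ^ s * (δ⁻¹ + 1) ^ s ∧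
      ∀ t ∈ Icc (0 : Fin s → ℝ) 1, ∃ x ∈ Γ, ∃ y ∈ Γ,
        Icc (0 : Fin s → ℝ) x ⊆ Icc (0 : Fin s → ℝ) t ∧
        Icc (0 : Fin s → ℝ) t ⊆ Icc (0 : Fin s → ℝ) y ∧
        volume (Icc (0 : Fin s → ℝ) y \ Icc (0 : Fin s → ℝ) x) ≤ ENNReal.ofReal δ := by
  classical
  obtain ⟨hδ0, hδ1⟩ := hδ
  have hsd : 0 ≤ (s : ℝ) / δ := by positivity
  obtain ⟨G, hc, hG, hcov⟩ := brackets_aux s ⌊(s : ℝ) / δ⌋₊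
  have hj1 := Nat.floor_le hsd
  have hj2 := (Nat.lt_floor_add_one ((s : ℝ) / δ)).le
  set j := ⌊(s : ℝ) / δ⌋₊
  refine ⟨G.image Prod.fst ∪ G.image Prod.snd, ?_, ?_, ?_⟩
  · intro x hx
    rw [Finset.mem_union, Finset.mem_image, Finset.mem_image] at hx
    rcases hx with ⟨p, hp, rfl⟩ | ⟨p, hp, rfl⟩
    · obtain ⟨h0, h1, h2, -⟩ := hG p hp
      exact ⟨h0, h1.trans h2⟩
    · obtain ⟨h0, h1, h2, -⟩ := hG p hp
      exact ⟨h0.trans h1, h2⟩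
  · have h1 : (G.image Prod.fst ∪ G.image Prod.snd).card ≤ 2 * (j + s).choose s := by
      have := Finset.card_union_le (G.image Prod.fst) (G.image Prod.snd)
      have a := Finset.card_image_le (s := G) (f := Prod.fst)
      have b := Finset.card_image_le (s := G) (f := Prod.snd)
      omega
    have h2 : ((j + s).choose s : ℝ) ≤ ((j + s : ℕ) : ℝ) ^ s / (s.factorial : ℝ) :=
      Nat.choose_le_pow_div s (j + s)
    have h3 : ((j + s : ℕ) : ℝ) ≤ s * (δ⁻¹ + 1) := by
      push_cast
      rw [mul_add, ← div_eq_mul_inv]; linarith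
    have h4 : (s : ℝ) ^ s / (s.factorial : ℝ) ≤ Real.exp 1 ^ s := by
      rw [← Real.exp_nat_mul, mul_one]
      exact Real.pow_div_factorial_le_exp _ (by positivity) s
    have h5 : (2 : ℝ) ≤ 2 ^ s := by
      calc (2 : ℝ) = 2 ^ 1 := by norm_num
        _ ≤ 2 ^ s := pow_le_pow_right₀ (by norm_num) hs
    calc ((G.image Prod.fst ∪ G.image Prod.snd).card : ℝ)
        ≤ 2 * ((j + s).choose s : ℝ) := by exact_mod_cast h1
      _ ≤ 2 * ((s * (δ⁻¹ + 1)) ^ s / (s.factorial : ℝ)) := by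
          gcongr
          exact h2.trans (by gcongr)
      _ = 2 * ((s : ℝ) ^ s / (s.factorial : ℝ)) * (δ⁻¹ + 1) ^ s := by rw [mul_pow]; ring
      _ ≤ 2 ^ s * Real.exp 1 ^ s * (δ⁻¹ + 1) ^ s := by gcongr
      _ = _ := by rw [mul_pow]
  · intro t ht
    obtain ⟨p, hp, hp1, hp2⟩ := hcov t ht
    obtain ⟨h0, h1, h2, h3⟩ := hG p hp
    refine ⟨p.1, Finset.mem_union_left _ (Finset.mem_image_of_mem _ hp),
      p.2, Finset.mem_union_right _ (Finset.mem_image_of_mem _ hp),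
      Icc_subset_Icc_right hp1, Icc_subset_Icc_right hp2, ?_⟩
    have hv : ∀ z : Fin s → ℝ, 0 ≤ z → volume (Icc (0 : Fin s → ℝ) z)
        = ENNReal.ofReal (∏ i, z i) := by
      intro z hz
      rw [Real.volume_Icc_pi, ENNReal.ofReal_prod_of_nonneg (fun i _ => hz i)]
      simp
    rw [measure_diff (Icc_subset_Icc_right h1) measurableSet_Icc.nullMeasurableSet
      (by rw [hv _ h0]; exact ENNReal.ofReal_ne_top), hv _ h0, hv _ (h0.trans h1),
      ← ENNReal.ofReal_sub _ (Finset.prod_nonneg fun i _ => h0 i)]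
    apply ENNReal.ofReal_le_ofReal
    refine h3.trans ?_
    rw [div_le_iff₀ (by positivity)]
    rw [div_le_iff₀ hδ0] at hj2
    linarith
end

section
/- Let s ≥ 2, let ψ : [0,1]^{s-1} → ℝ≥0 be measurable with ψ(z) ≤ L for all z ∈ [0,1]^{s-1}, where 0 < L < ∞. Set A = {z ∈ [0,1]^s : ψ(z_1,…,z_{s-1}) ≥ L z_s} and, for t ∈ [0,1]^{s-1}, J_t* = ([0,t) × [0,1]) ∩ A, where [0,t) = ∏_{j=1}^{s-1} [0,t_j). Then for every δ > 0 there exists a finite family Γ_δ of measurable subsets of A with |Γ_δ| ≤ (2e)^{s-1}(δ^{-1}+1)^{s-1} such that for every t ∈ [0,1]^{s-1} there exist B_1, B_2 ∈ Γ_δ with B_1 ⊆ J_t* ⊆ B_2 and λ(B_2 \ B_1) ≤ δ, where λ is Lebesgue measure. -/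
open MeasureTheory Set

/-- The half-open anchored box `[0,t) = ∏_j [0, t_j)` in `[0,1]^d`. -/
def lowerBox {d : ℕ} (t : Fin d → ℝ) : Set (Fin d → ℝ) :=
  {y | ∀ i, 0 ≤ y i ∧ y i < t i}

/-- The region `A = {z ∈ [0,1]^s : ψ(z_1,…,z_{s-1}) ≥ L z_s}` below the graph of `ψ/L`,
where the first `s-1 = d` coordinates are modelled by `Fin d → ℝ` and the last one by `ℝ`. -/
def graphRegion {d : ℕ} (ψ : (Fin d → ℝ) → ℝ) (L : ℝ) : Set ((Fin d → ℝ) × ℝ) :=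
  {z | z.1 ∈ Icc (0 : Fin d → ℝ) 1 ∧ z.2 ∈ Icc (0 : ℝ) 1 ∧ L * z.2 ≤ ψ z.1}

/-- The test set `J_t* = ([0,t) × [0,1]) ∩ A`. -/
def Jstar {d : ℕ} (ψ : (Fin d → ℝ) → ℝ) (L : ℝ) (t : Fin d → ℝ) : Set ((Fin d → ℝ) × ℝ) :=
  (lowerBox t ×ˢ Icc (0 : ℝ) 1) ∩ graphRegion ψ L

lemma aux_pow (b : ℝ) (hb : 0 ≤ b) (n : ℕ) : b ^ (n+1) + (n+1) * b ^ n ≤ (b+1)^(n+1) := by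
  induction n with
  | zero => simp
  | succ n ih =>
    have h1 : (0:ℝ) ≤ (n+1) * b^n := by positivity
    have h2 := mul_le_mul_of_nonneg_right ih (by linarith : 0 ≤ b + 1)
    rw [pow_succ (b+1) (n+1)]
    refine le_trans ?_ h2
    push_cast
    ring_nf at h1 ⊢
    nlinarith

lemma aux_sum (n m : ℕ) : ∑ j ∈ Finset.range m, ((j:ℝ) + n)^n / (n.factorial : ℝ) ≤
    ((m:ℝ) + n)^(n+1) / ((n+1).factorial : ℝ) := by
  induction m with
  | zero => simp; positivity
  | succ m ih =>
    rw [Finset.sum_range_succ]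
    refine le_trans (add_le_add_left ih _) ?_
    have h := aux_pow ((m:ℝ)+n) (by positivity) n
    have hf : (0:ℝ) < (n.factorial : ℝ) := by positivity
    rw [Nat.factorial_succ]
    push_cast
    have hn : (0:ℝ) < (n:ℝ)+1 := by positivity
    have : ((m:ℝ) + n)^n / (n.factorial : ℝ) =
        ((n+1) * ((m:ℝ)+n)^n) / (((n:ℝ)+1) * n.factorial) := by field_simp
    rw [this, ← add_div]
    apply div_le_div_of_nonneg_right _ (by positivity)
    refine h.trans (le_of_eq ?_)
    ring

lemma aux_cells (d : ℕ) : ∀ a : ℝ, 0 ≤ a → ∃ C : Finset ((Fin d → ℝ) × (Fin d → ℝ)),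
    (C.card : ℝ) ≤ (a + d)^d / (d.factorial : ℝ) ∧
    ∀ t ∈ Icc (0 : Fin d → ℝ) 1, ∃ c ∈ C, 0 ≤ c.1 ∧ c.1 ≤ t ∧ t ≤ c.2 ∧ c.2 ≤ 1 ∧
      (∏ i, c.2 i - ∏ i, c.1 i) * a ≤ d := by
  classical
  induction d with
  | zero =>
    intro a ha
    refine ⟨{(0, 0)}, by simp, fun t ht => ⟨(0,0), by simp, ?_⟩⟩
    refine ⟨le_rfl, fun i => i.elim0, fun i => i.elim0, fun i => i.elim0, by simp⟩
  | succ n ih =>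
    intro a ha
    obtain ⟨m, hm⟩ : ∃ m : ℕ, m = ⌊a⌋₊ + 1 := ⟨_, rfl⟩
    have hm0 : (0:ℝ) < m := by rw [hm]; positivity
    have ham : a ≤ m := by rw [hm]; push_cast; exact (Nat.lt_floor_add_one a).le
    have hma : (m:ℝ) ≤ a + 1 := by
      rw [hm]; push_cast; linarith [Nat.floor_le ha]
    have ih' : ∀ j : ℕ, ∃ C : Finset ((Fin n → ℝ) × (Fin n → ℝ)),
      (C.card : ℝ) ≤ (a * (j / m) + n)^n / (n.factorial : ℝ) ∧
      ∀ t ∈ Icc (0 : Fin n → ℝ) 1, ∃ c ∈ C, 0 ≤ c.1 ∧ c.1 ≤ t ∧ t ≤ c.2 ∧ c.2 ≤ 1 ∧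
      (∏ i, c.2 i - ∏ i, c.1 i) * (a * (j / m)) ≤ n := fun j => ih _ (by positivity)
    choose C hC1 hC2 using ih'
    refine ⟨(Finset.range m).biUnion fun j => (C j).image fun c =>
      (Fin.cons ((j:ℝ)/m) c.1, Fin.cons (((j:ℝ)+1)/m) c.2), ?_, ?_⟩
    · have h1 : ((Finset.range m).biUnion fun j => (C j).image fun c =>
          ((Fin.cons ((j:ℝ)/m) c.1 : Fin (n+1) → ℝ),
            (Fin.cons (((j:ℝ)+1)/m) c.2 : Fin (n+1) → ℝ))).card
          ≤ ∑ j ∈ Finset.range m, (C j).card :=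
        Finset.card_biUnion_le.trans (Finset.sum_le_sum fun j _ => Finset.card_image_le)
      have h2 : ∑ j ∈ Finset.range m, ((C j).card : ℝ) ≤
          ∑ j ∈ Finset.range m, ((j:ℝ) + n)^n / (n.factorial : ℝ) := by
        apply Finset.sum_le_sum
        intro j _
        refine (hC1 j).trans ?_
        have : a * ((j:ℝ)/m) ≤ j := by
          rw [← mul_div_assoc, div_le_iff₀ hm0]
          nlinarith [(Nat.cast_nonneg j : (0:ℝ) ≤ j)]
        gcongr
      calc _ ≤ ((∑ j ∈ Finset.range m, (C j).card : ℕ) : ℝ) := by exact_mod_cast h1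
        _ = ∑ j ∈ Finset.range m, ((C j).card : ℝ) := by push_cast; rfl
        _ ≤ _ := h2
        _ ≤ _ := aux_sum n m
        _ ≤ _ := by
          push_cast
          apply div_le_div_of_nonneg_right _ (by positivity)
          apply pow_le_pow_left₀ (by positivity)
          linarith
    · intro t ht
      have ht0 : 0 ≤ t 0 := ht.1 0
      have ht1 : t 0 ≤ 1 := ht.2 0
      obtain ⟨j, hjm, hj1, hj2⟩ : ∃ j : ℕ, j < m ∧ (j:ℝ)/m ≤ t 0 ∧ t 0 ≤ ((j:ℝ)+1)/m := by
        rcases ht1.lt_or_eq with h | h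
        · refine ⟨⌊(m:ℝ) * t 0⌋₊, ?_, ?_, ?_⟩
          · rw [Nat.floor_lt (by positivity)]; nlinarith
          · rw [div_le_iff₀ hm0]
            linarith [Nat.floor_le (by positivity : 0 ≤ (m:ℝ) * t 0)]
          · rw [le_div_iff₀ hm0]
            linarith [Nat.lt_floor_add_one ((m:ℝ) * t 0)]
        · refine ⟨⌊a⌋₊, by omega, ?_, ?_⟩
          · rw [div_le_iff₀ hm0, h, hm]; push_cast; linarith
          · rw [le_div_iff₀ hm0, h, hm]; push_cast; linarith
      obtain ⟨c, hc, h0, h1, h2, h3, h4⟩ := hC2 j (fun i => t i.succ)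
        ⟨fun i => ht.1 i.succ, fun i => ht.2 i.succ⟩
      refine ⟨(Fin.cons ((j:ℝ)/m) c.1, Fin.cons (((j:ℝ)+1)/m) c.2), ?_, ?_, ?_, ?_, ?_, ?_⟩
      · simp only [Finset.mem_biUnion, Finset.mem_image, Finset.mem_range]
        exact ⟨j, hjm, c, hc, rfl⟩
      · intro i
        refine Fin.cases ?_ (fun i => ?_) i
        · simp; positivity
        · simpa using h0 i
      · intro i
        refine Fin.cases ?_ (fun i => ?_) i
        · simpa using hj1
        · simpa using h1 i
      · intro i
        refine Fin.cases ?_ (fun i => ?_) i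
        · simpa using hj2
        · simpa using h2 i
      · intro i
        refine Fin.cases ?_ (fun i => ?_) i
        · simp only [Fin.cons_zero, Pi.one_apply]
          rw [div_le_one hm0]; exact_mod_cast hjm
        · simpa using h3 i
      · simp only [Fin.prod_univ_succ, Fin.cons_zero, Fin.cons_succ]
        have hp : ∏ i, c.2 i ≤ 1 :=
          Finset.prod_le_one (fun i _ => (h0 i).trans ((h1 i).trans (h2 i))) (fun i _ => h3 i)
        have hp0 : 0 ≤ ∏ i, c.2 i :=
          Finset.prod_nonneg (fun i _ => (h0 i).trans ((h1 i).trans (h2 i)))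
        have ha1 : a / m ≤ 1 := by rw [div_le_one hm0]; exact ham
        have ha0 : 0 ≤ a / m := by positivity
        have : (((j:ℝ)+1)/m * ∏ i, c.2 i - (j:ℝ)/m * ∏ i, c.1 i) * a =
          (a / m) * ∏ i, c.2 i + (∏ i, c.2 i - ∏ i, c.1 i) * (a * (j / m)) := by ring
        rw [this]; push_cast
        nlinarith [mul_le_one₀ ha1 hp0 hp]

lemma aux_box {d : ℕ} (t : Fin d → ℝ) : lowerBox t = univ.pi fun i => Ico 0 (t i) := by
  ext y; simp [lowerBox, Set.mem_pi]

lemma aux_vol {d : ℕ} (t : Fin d → ℝ) (ht : 0 ≤ t) :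
    volume (lowerBox t) = ENNReal.ofReal (∏ i, t i) := by
  rw [aux_box, volume_pi_pi, ENNReal.ofReal_prod_of_nonneg (fun i _ => ht i)]
  simp

lemma aux_meas_box {d : ℕ} (t : Fin d → ℝ) : MeasurableSet (lowerBox t) := by
  rw [aux_box]; exact MeasurableSet.univ_pi fun i => measurableSet_Ico

lemma aux_box_mono {d : ℕ} {x y : Fin d → ℝ} (h : x ≤ y) : lowerBox x ⊆ lowerBox y :=
  fun _ hz i => ⟨(hz i).1, (hz i).2.trans_le (h i)⟩

lemma aux_J_mono {d : ℕ} (ψ : (Fin d → ℝ) → ℝ) (L : ℝ) {x y : Fin d → ℝ} (h : x ≤ y) :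
    Jstar ψ L x ⊆ Jstar ψ L y :=
  inter_subset_inter_left _ (prod_mono_left (aux_box_mono h))

lemma aux_meas_J {d : ℕ} (ψ : (Fin d → ℝ) → ℝ) (hmeas : Measurable ψ) (L : ℝ) (t : Fin d → ℝ) :
    MeasurableSet (Jstar ψ L t) := by
  refine ((aux_meas_box t).prod measurableSet_Icc).inter ?_
  have h1 : MeasurableSet {z : (Fin d → ℝ) × ℝ | z.1 ∈ Icc (0 : Fin d → ℝ) 1} :=
    measurable_fst measurableSet_Icc
  have h2 : MeasurableSet {z : (Fin d → ℝ) × ℝ | z.2 ∈ Icc (0 : ℝ) 1} :=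
    measurable_snd measurableSet_Icc
  have h3 : MeasurableSet {z : (Fin d → ℝ) × ℝ | L * z.2 ≤ ψ z.1} :=
    measurableSet_le (measurable_snd.const_mul L) (hmeas.comp measurable_fst)
  exact h1.inter (h2.inter h3)

lemma aux_diff {d : ℕ} (ψ : (Fin d → ℝ) → ℝ) (L : ℝ) {x y : Fin d → ℝ} (hx : 0 ≤ x)
    (h : x ≤ y) : volume (Jstar ψ L y \ Jstar ψ L x) ≤
      ENNReal.ofReal (∏ i, y i - ∏ i, x i) := by
  have hsub : Jstar ψ L y \ Jstar ψ L x ⊆ (lowerBox y \ lowerBox x) ×ˢ Icc (0:ℝ) 1 := by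
    rintro z ⟨⟨⟨h1, h2⟩, h3⟩, h4⟩
    exact ⟨⟨h1, fun h5 => h4 ⟨⟨h5, h2⟩, h3⟩⟩, h2⟩
  refine (measure_mono hsub).trans ?_
  rw [Measure.volume_eq_prod, Measure.prod_prod, measure_diff (aux_box_mono h)
    (aux_meas_box x).nullMeasurableSet (by rw [aux_vol x hx]; exact ENNReal.ofReal_ne_top),
    aux_vol x hx, aux_vol y (hx.trans h),
    ← ENNReal.ofReal_sub _ (Finset.prod_nonneg fun i _ => hx i)]
  simp

/-- **δ-cover for the acceptance-rejection test sets** (Lemma 2 of the paper, with `s = d+1`):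
for any `δ > 0` there is a family `Γ_δ` of measurable subsets of `A` of cardinality at most
`(2e)^{s-1}(δ⁻¹+1)^{s-1}` such that every `J_t*` is sandwiched `B₁ ⊆ J_t* ⊆ B₂` between two
members of `Γ_δ` with `λ(B₂ \ B₁) ≤ δ`. -/
theorem delta_cover_acceptance_rejection (d : ℕ) (hd : 1 ≤ d)
    (L : ℝ) (hL : 0 < L) (ψ : (Fin d → ℝ) → ℝ) (hmeas : Measurable ψ)
    (hψ0 : ∀ z ∈ Icc (0 : Fin d → ℝ) 1, 0 ≤ ψ z)
    (hψL : ∀ z ∈ Icc (0 : Fin d → ℝ) 1, ψ z ≤ L)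
    (δ : ℝ) (hδ : 0 < δ) :
    ∃ Γ : Finset (Set ((Fin d → ℝ) × ℝ)),
      (∀ B ∈ Γ, MeasurableSet B ∧ B ⊆ graphRegion ψ L) ∧
      (Γ.card : ℝ) ≤ (2 * Real.exp 1) ^ d * (δ⁻¹ + 1) ^ d ∧
      ∀ t ∈ Icc (0 : Fin d → ℝ) 1, ∃ B₁ ∈ Γ, ∃ B₂ ∈ Γ,
        B₁ ⊆ Jstar ψ L t ∧ Jstar ψ L t ⊆ B₂ ∧ volume (B₂ \ B₁) ≤ ENNReal.ofReal δ := by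
  classical
  have hd0 : (0:ℝ) < d := by exact_mod_cast hd
  obtain ⟨C, hC, hcov⟩ := aux_cells d (d / δ) (by positivity)
  refine ⟨(C.image fun c => Jstar ψ L c.1) ∪ (C.image fun c => Jstar ψ L c.2), ?_, ?_, ?_⟩
  · intro B hB
    simp only [Finset.mem_union, Finset.mem_image] at hB
    rcases hB with ⟨c, _, rfl⟩ | ⟨c, _, rfl⟩ <;>
      exact ⟨aux_meas_J ψ hmeas L _, inter_subset_right⟩
  · have h1 : ((C.image fun c => Jstar ψ L c.1) ∪ (C.image fun c => Jstar ψ L c.2)).card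
        ≤ 2 * C.card := by
      refine (Finset.card_union_le _ _).trans ?_
      have h1 := Finset.card_image_le (s := C) (f := fun c => Jstar ψ L c.1)
      have h2 := Finset.card_image_le (s := C) (f := fun c => Jstar ψ L c.2)
      omega
    have h2 : (2:ℝ) ≤ 2 ^ d := by
      simpa using pow_le_pow_right₀ (by norm_num : (1:ℝ) ≤ 2) hd
    have h3 : (d:ℝ)^d / (d.factorial : ℝ) ≤ Real.exp 1 ^ d := by
      rw [← Real.exp_nat_mul, mul_one]
      exact Real.pow_div_factorial_le_exp _ hd0.le d
    calc _ ≤ ((2 * C.card : ℕ) : ℝ) := by exact_mod_cast h1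
      _ = 2 * (C.card : ℝ) := by push_cast; rfl
      _ ≤ 2 * ((d / δ + d)^d / (d.factorial : ℝ)) := by gcongr
      _ = 2 * ((d:ℝ)^d / (d.factorial : ℝ)) * (δ⁻¹ + 1)^d := by
        have : (d:ℝ) / δ + d = d * (δ⁻¹ + 1) := by ring
        rw [this, mul_pow]; ring
      _ ≤ 2 ^ d * Real.exp 1 ^ d * (δ⁻¹ + 1)^d := by gcongr
      _ = _ := by rw [mul_pow]
  · intro t ht
    obtain ⟨c, hc, h0, h1, h2, _, h4⟩ := hcov t ht
    refine ⟨_, Finset.mem_union_left _ (Finset.mem_image_of_mem _ hc),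
      _, Finset.mem_union_right _ (Finset.mem_image_of_mem _ hc),
      aux_J_mono ψ L h1, aux_J_mono ψ L h2, (aux_diff ψ L h0 (h1.trans h2)).trans ?_⟩
    apply ENNReal.ofReal_le_ofReal
    rw [← mul_div_assoc, div_le_iff₀ hδ, mul_comm] at h4
    exact le_of_mul_le_mul_left h4 hd0
end

section
/- Let s ≥ 2 and let A ⊆ [0,1]^s be a measurable set whose boundary ∂A admits an (s−1)-dimensional Minkowski content M_A ∈ (0,∞). For m ∈ ℕ partition [0,1)^s into the M = m^s cubes Q_c = ∏_{j=1}^s [c_j/m,(c_j+1)/m), c ∈ {0,…,m−1}^s. Then there exists m_0 ∈ ℕ such that for all m ≥ m_0 and every point set P = {x_c : c ∈ {0,…,m−1}^s} ⊆ [0,1)^s containing exactly one point x_c in each cube Q_c, the number N of points of P lying in A satisfies M(λ(A) − 3 s^{1/2} M_A M^{−1/s}) ≤ N ≤ M(λ(A) + 3 s^{1/2} M_A M^{−1/s}), i.e. |N − m^s λ(A)| ≤ 3 s^{1/2} M_A m^{s−1}. -/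
open MeasureTheory Set Filter

/-- The closed Euclidean `ε`-neighborhood of a set `E ⊆ ℝ^s`. -/
def euclNbhd {s : ℕ} (E : Set (Fin s → ℝ)) (ε : ℝ) : Set (Fin s → ℝ) :=
  {x | ∃ y ∈ E, Real.sqrt (∑ i, (x i - y i) ^ 2) ≤ ε}

/-- `∂A` admits the `(s-1)`-dimensional Minkowski content `M`. -/
def HasMinkowskiContent {s : ℕ} (A : Set (Fin s → ℝ)) (M : ℝ) : Prop :=
  Tendsto (fun ε : ℝ => (volume (euclNbhd (frontier A) ε)).toReal / (2 * ε))
    (nhdsWithin 0 (Set.Ioi 0)) (nhds M)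

/-- The grid cube `Q_c = ∏_j [c_j/m, (c_j+1)/m)`. -/
def gridCube {s m : ℕ} (c : Fin s → Fin m) : Set (Fin s → ℝ) :=
  {x | ∀ i, (c i : ℝ) / m ≤ x i ∧ x i < ((c i : ℝ) + 1) / m}

theorem gridCube_eq_pi {s m : ℕ} (c : Fin s → Fin m) :
    gridCube c = Set.pi univ (fun i => Ico ((c i : ℝ) / m) (((c i : ℝ) + 1) / m)) := by
  ext x; simp [gridCube, Set.mem_pi]

theorem gridCube_meas {s m : ℕ} (c : Fin s → Fin m) : MeasurableSet (gridCube c) := by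
  rw [gridCube_eq_pi]
  exact MeasurableSet.univ_pi (fun i => measurableSet_Ico)

theorem gridCube_vol {s m : ℕ} (c : Fin s → Fin m) :
    volume (gridCube c) = ENNReal.ofReal (1 / (m : ℝ) ^ s) := by
  rw [gridCube_eq_pi, Real.volume_pi_Ico]
  have : ∀ i, ((c i : ℝ) + 1) / m - (c i : ℝ) / m = 1 / m := by intro i; ring
  simp only [this]
  rw [Finset.prod_const, ← ENNReal.ofReal_pow (by positivity)]
  simp

theorem gridCube_floor {s m : ℕ} (hm : 0 < m) (c : Fin s → Fin m) {x : Fin s → ℝ}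
    (hx : x ∈ gridCube c) (i : Fin s) : ⌊(m : ℝ) * x i⌋₊ = (c i : ℕ) := by
  have hm' : (0 : ℝ) < m := by exact_mod_cast hm
  obtain ⟨h1, h2⟩ := hx i
  rw [div_le_iff₀ hm'] at h1
  rw [lt_div_iff₀ hm'] at h2
  have h0 : (0 : ℝ) ≤ (c i : ℕ) := by positivity
  rw [Nat.floor_eq_iff (by nlinarith)]
  constructor <;> nlinarith

theorem gridCube_disj {s m : ℕ} (hm : 0 < m) :
    Pairwise (fun c d : Fin s → Fin m => Disjoint (gridCube c) (gridCube d)) := by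
  intro c d hcd
  rw [Set.disjoint_left]
  intro x hx hy
  apply hcd
  ext i
  rw [← gridCube_floor hm c hx i, ← gridCube_floor hm d hy i]

theorem gridCube_cover {s m : ℕ} (hm : 0 < m) :
    Set.pi univ (fun _ : Fin s => Ico (0 : ℝ) 1) ⊆ ⋃ c : Fin s → Fin m, gridCube c := by
  have hm' : (0 : ℝ) < m := by exact_mod_cast hm
  intro x hx
  have hx' : ∀ i, 0 ≤ x i ∧ x i < 1 := by simpa [Set.mem_pi] using hx
  have hf : ∀ i, ⌊(m : ℝ) * x i⌋₊ < m := by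
    intro i
    have := hx' i
    rw [Nat.floor_lt (by nlinarith)]
    nlinarith
  refine mem_iUnion.2 ⟨fun i => ⟨_, hf i⟩, fun i => ⟨?_, ?_⟩⟩
  · rw [div_le_iff₀ hm', mul_comm]
    exact Nat.floor_le (mul_nonneg hm'.le (hx' i).1)
  · rw [lt_div_iff₀ hm', mul_comm]
    exact Nat.lt_floor_add_one _

theorem vol_split {s m : ℕ} (hm : 0 < m) (A : Set (Fin s → ℝ))
    (hA : A ⊆ Icc (0 : Fin s → ℝ) 1) (hAmeas : MeasurableSet A) :
    volume.real A = ∑ c : Fin s → Fin m, volume.real (A ∩ gridCube c) := by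
  have hfin : volume A ≠ ⊤ :=
    ((measure_mono hA).trans_lt isCompact_Icc.measure_lt_top).ne
  have h1 : volume A = volume (A ∩ ⋃ c : Fin s → Fin m, gridCube c) := by
    apply le_antisymm _ (measure_mono inter_subset_left)
    apply measure_mono_ae
    have h2 : Set.pi univ (fun _ : Fin s => Ico (0 : ℝ) 1) =ᵐ[volume] Icc (0 : Fin s → ℝ) 1 :=
      Measure.univ_pi_Ico_ae_eq_Icc (μ := fun _ : Fin s => (volume : Measure ℝ))
        (f := 0) (g := 1)
    filter_upwards [h2.symm.le] with x hx hxA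
    exact ⟨hxA, gridCube_cover hm (hx (hA hxA))⟩
  rw [Measure.real, h1, inter_iUnion, measure_iUnion _ (fun c => hAmeas.inter (gridCube_meas c)),
    tsum_fintype, ENNReal.toReal_sum]
  · rfl
  · intro c _
    exact ((measure_mono inter_subset_left).trans_lt hfin.lt_top).ne
  · intro c d hcd
    exact (gridCube_disj hm hcd).mono inter_subset_right inter_subset_right

theorem gridCube_cross {s m : ℕ} (hm : 0 < m) (c : Fin s → Fin m) (A : Set (Fin s → ℝ))
    (h1 : (gridCube c ∩ A).Nonempty) (h2 : (gridCube c ∩ Aᶜ).Nonempty) :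
    gridCube c ⊆ euclNbhd (frontier A) (Real.sqrt s / m) := by
  have hm' : (0 : ℝ) < m := by exact_mod_cast hm
  have hconv : Convex ℝ (gridCube c) := by
    rw [gridCube_eq_pi]
    exact convex_pi (fun i _ => convex_Ico _ _)
  obtain ⟨y, hy, hyA⟩ : ∃ y ∈ gridCube c, y ∈ frontier A := by
    by_contra! hno
    obtain ⟨p, hp, hpA⟩ := h1
    obtain ⟨q, hq, hqA⟩ := h2
    have hcl : ∀ z ∈ gridCube c, z ∈ closure A → z ∈ interior A := by
      intro z hz hzc
      by_contra hzi
      exact hno z hz ⟨hzc, hzi⟩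
    obtain ⟨z, _, hz1, hz2⟩ := hconv.isPreconnected (interior A) (closure A)ᶜ isOpen_interior
      isClosed_closure.isOpen_compl
      (fun z hz => by
        by_cases hzc : z ∈ closure A
        · exact Or.inl (hcl z hz hzc)
        · exact Or.inr hzc)
      ⟨p, hp, hcl p hp (subset_closure hpA)⟩
      ⟨q, hq, fun hqc => hqA (interior_subset (hcl q hq hqc))⟩
    exact hz2 (subset_closure (interior_subset hz1))
  intro x hx
  refine ⟨y, hyA, ?_⟩
  have hb : ∑ i, (x i - y i) ^ 2 ≤ (Real.sqrt s / m) ^ 2 := by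
    rw [div_pow, Real.sq_sqrt (by positivity)]
    calc ∑ i, (x i - y i) ^ 2 ≤ ∑ i : Fin s, (1 / (m : ℝ)) ^ 2 := by
          apply Finset.sum_le_sum
          intro i _
          have a := hx i
          have b := hy i
          rw [add_div] at a b
          apply sq_le_sq'  <;> linarith
      _ = _ := by simp; ring
  exact Real.sqrt_le_iff.2 ⟨by positivity, hb⟩

/-- **Bound on the number of accepted points** (Lemma 4 of the paper): for every stratified
point set (one point `x_c` in each of the `M = m^s` grid cubes), the number `N` of points
lying in `A` satisfies `|N - m^s λ(A)| ≤ 3 √s M_A m^{s-1}`, i.e.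
`M(λ(A) - 3√s M_A M^{-1/s}) ≤ N ≤ M(λ(A) + 3√s M_A M^{-1/s})`, provided `m` is large. -/
theorem accepted_points_bound (s : ℕ) (hs : 2 ≤ s) (A : Set (Fin s → ℝ))
    (hA : A ⊆ Icc (0 : Fin s → ℝ) 1) (hAmeas : MeasurableSet A)
    (MA : ℝ) (hMApos : 0 < MA) (hMink : HasMinkowskiContent A MA) :
    ∃ m₀ : ℕ, ∀ m : ℕ, m₀ ≤ m →
      ∀ x : (Fin s → Fin m) → (Fin s → ℝ), (∀ c, x c ∈ gridCube c) →
        |(Nat.card {c : Fin s → Fin m // x c ∈ A} : ℝ) - (m : ℝ) ^ s * (volume A).toReal|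
          ≤ 3 * Real.sqrt s * MA * (m : ℝ) ^ (s - 1) := by
  classical
  have hs0 : 0 < Real.sqrt s := Real.sqrt_pos.2 (by exact_mod_cast (by omega : 0 < s))
  have hlim : Tendsto (fun m : ℕ => Real.sqrt s / (m : ℝ)) atTop (nhdsWithin 0 (Set.Ioi 0)) := by
    rw [tendsto_nhdsWithin_iff]
    refine ⟨tendsto_const_div_atTop_nhds_zero_nat _, ?_⟩
    filter_upwards [eventually_gt_atTop 0] with m hm
    have hm' : (0 : ℝ) < m := by exact_mod_cast hm
    exact div_pos hs0 hm'
  have hev := (hMink.comp hlim).eventually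
    (Ioo_mem_nhds (by linarith : (0 : ℝ) < MA) (by linarith : MA < 3 / 2 * MA))
  obtain ⟨m₀, hm₀⟩ := eventually_atTop.1 (hev.and (eventually_gt_atTop 0))
  refine ⟨m₀, fun m hmm x hx => ?_⟩
  obtain ⟨⟨hlo, hhi⟩, hm⟩ := hm₀ m hmm
  have hm' : (0 : ℝ) < m := by exact_mod_cast hm
  simp only [Function.comp] at hlo hhi
  set E := euclNbhd (frontier A) (Real.sqrt s / m) with hE
  have hEfin : volume E ≠ ⊤ := by
    intro h
    simp [h] at hlo
  have hEle : (volume E).toReal ≤ 3 * Real.sqrt s * MA / m := by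
    rw [div_lt_iff₀ (by positivity)] at hhi
    refine hhi.le.trans (le_of_eq ?_)
    ring
  have hQ : ∀ c : Fin s → Fin m, volume.real (gridCube c) = 1 / (m : ℝ) ^ s := by
    intro c
    rw [Measure.real, gridCube_vol, ENNReal.toReal_ofReal (by positivity)]
  have hQfin : ∀ c : Fin s → Fin m, volume (gridCube c) ≠ ⊤ := by
    intro c
    rw [gridCube_vol]; exact ENNReal.ofReal_ne_top
  let B : Finset (Fin s → Fin m) := Finset.univ.filter
    (fun c => (gridCube c ∩ A).Nonempty ∧ (gridCube c ∩ Aᶜ).Nonempty)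
  have hB : (B.card : ℝ) * (1 / (m : ℝ) ^ s) ≤ (volume E).toReal := by
    have h1 : volume.real (⋃ c ∈ B, gridCube c) = ∑ c ∈ B, volume.real (gridCube c) :=
      measureReal_biUnion_finset (fun c _ d _ hcd => gridCube_disj hm hcd)
        (fun c _ => gridCube_meas c) (fun c _ => hQfin c)
    simp only [hQ, Finset.sum_const, nsmul_eq_mul] at h1
    rw [← h1]
    refine measureReal_mono (iUnion₂_subset fun c hc => ?_) hEfin
    have := (Finset.mem_filter.1 hc).2
    exact gridCube_cross hm c A this.1 this.2
  have hmain : ∀ c : Fin s → Fin m,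
      |(if x c ∈ A then (1 : ℝ) else 0) - (m : ℝ) ^ s * volume.real (A ∩ gridCube c)|
        ≤ if c ∈ B then 1 else 0 := by
    intro c
    have hms : (0 : ℝ) < (m : ℝ) ^ s := by positivity
    by_cases hc : c ∈ B
    · rw [if_pos hc]
      have h0 : 0 ≤ (m : ℝ) ^ s * volume.real (A ∩ gridCube c) :=
        mul_nonneg hms.le measureReal_nonneg
      have h1 : (m : ℝ) ^ s * volume.real (A ∩ gridCube c) ≤ 1 := by
        have := measureReal_mono (inter_subset_right : A ∩ gridCube c ⊆ gridCube c) (hQfin c)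
        rw [hQ, le_div_iff₀ hms] at this
        linarith
      rw [abs_le]
      split_ifs <;> constructor <;> linarith
    · rw [if_neg hc]
      by_cases hxA : x c ∈ A
      · have hsub : A ∩ gridCube c = gridCube c := by
          refine inter_eq_right.2 fun z hz => ?_
          by_contra hzA
          exact hc (Finset.mem_filter.2 ⟨Finset.mem_univ _, ⟨_, hx c, hxA⟩, ⟨z, hz, hzA⟩⟩)
        rw [if_pos hxA, hsub, hQ, mul_one_div_cancel hms.ne']
        simp
      · have hsub : A ∩ gridCube c = ∅ := by
          refine eq_empty_iff_forall_notMem.2 fun z hz => ?_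
          exact hc (Finset.mem_filter.2 ⟨Finset.mem_univ _, ⟨z, hz.2, hz.1⟩, ⟨_, hx c, hxA⟩⟩)
        simp [hxA, hsub]
  have hN : (Nat.card {c : Fin s → Fin m // x c ∈ A} : ℝ)
      = ∑ c, if x c ∈ A then (1 : ℝ) else 0 := by
    rw [Nat.card_eq_fintype_card, Fintype.card_subtype, Finset.sum_boole]
  have hV : (volume A).toReal = ∑ c : Fin s → Fin m, volume.real (A ∩ gridCube c) :=
    vol_split hm A hA hAmeas
  rw [hN, hV, Finset.mul_sum, ← Finset.sum_sub_distrib]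
  calc _ ≤ ∑ c, |(if x c ∈ A then (1 : ℝ) else 0) - (m : ℝ) ^ s * volume.real (A ∩ gridCube c)| :=
        Finset.abs_sum_le_sum_abs _ _
    _ ≤ ∑ c, if c ∈ B then (1 : ℝ) else 0 := Finset.sum_le_sum fun c _ => hmain c
    _ = B.card := by simp
    _ ≤ 3 * Real.sqrt s * MA / m * (m : ℝ) ^ s := by
        rw [mul_one_div, div_le_iff₀ (by positivity)] at hB
        exact hB.trans (by gcongr)
    _ = _ := by
        obtain ⟨k, rfl⟩ : ∃ k, s = k + 1 := ⟨s - 1, by omega⟩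
        rw [Nat.add_sub_cancel, pow_succ]
        field_simp
end

section
/- Let s ≥ 2, let ψ : [0,1]^{s-1} → ℝ≥0 be measurable with ψ(z) ≤ L for all z, where 0 < L < ∞, and set C = ∫_{[0,1]^{s-1}} ψ(z) dz > 0, A = {z ∈ [0,1]^s : ψ(z_1,…,z_{s-1}) ≥ L z_s}, and J_t* = ([0,t) × [0,1]) ∩ A for t ∈ [0,1]^{s-1}. Then: (i) λ(A) = C/L; (ii) λ(J_t*) = (1/L) ∫_{[0,t)} ψ(z) dz for every t ∈ [0,1]^{s-1}; and consequently (iii) for any finite point set x_0,…,x_{M−1} ∈ [0,1]^s with N ≥ 1 accepted points (points lying in A), letting y_0,…,y_{N−1} ∈ [0,1]^{s-1} be the projections onto the first s−1 coordinates of the points of {x_0,…,x_{M−1}} lying in A, one has for every t ∈ [0,1]^{s-1}: |(1/N) Σ_{n=0}^{N−1} 1_{[0,t)}(y_n) − (1/C) ∫_{[0,t)} ψ(z) dz| = |(1/N) Σ_{n=0}^{M−1} 1_{J_t*}(x_n) − λ(J_t*)/λ(A)|. -/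
open MeasureTheory Set

lemma vol_aux {d : ℕ} (L : ℝ) (hL : 0 < L) (ψ : (Fin d → ℝ) → ℝ) (hmeas : Measurable ψ)
    (hψ0 : ∀ z ∈ Icc (0 : Fin d → ℝ) 1, 0 ≤ ψ z)
    (hψL : ∀ z ∈ Icc (0 : Fin d → ℝ) 1, ψ z ≤ L)
    (B : Set (Fin d → ℝ)) (hB : MeasurableSet B) (hsub : B ⊆ Icc 0 1) :
    volume {z : (Fin d → ℝ) × ℝ | z.1 ∈ B ∧ z.2 ∈ Icc (0 : ℝ) 1 ∧ L * z.2 ≤ ψ z.1}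
      = ENNReal.ofReal ((1 / L) * ∫ z in B, ψ z) := by
  have hms : MeasurableSet
      {z : (Fin d → ℝ) × ℝ | z.1 ∈ B ∧ z.2 ∈ Icc (0 : ℝ) 1 ∧ L * z.2 ≤ ψ z.1} := by
    refine (measurable_fst hB).inter ((measurable_snd measurableSet_Icc).inter ?_)
    exact measurableSet_le (measurable_snd.const_mul L) (hmeas.comp measurable_fst)
  have hint : IntegrableOn ψ B := by
    have hfin : volume B ≠ ⊤ :=
      ((measure_mono hsub).trans_lt (isCompact_Icc.measure_lt_top)).ne
    refine IntegrableOn.of_bound hfin.lt_top hmeas.aestronglyMeasurable L ?_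
    refine (ae_restrict_iff' hB).2 (Filter.Eventually.of_forall fun z hz => ?_)
    rw [Real.norm_eq_abs, abs_of_nonneg (hψ0 z (hsub hz))]
    exact hψL z (hsub hz)
  rw [Measure.volume_eq_prod, Measure.prod_apply hms, ← integral_const_mul,
    ofReal_integral_eq_lintegral_ofReal (hint.const_mul (1 / L)), ← lintegral_indicator hB]
  · congr 1
    ext z
    by_cases hz : z ∈ B
    · rw [indicator_of_mem hz]
      have : (Prod.mk z ⁻¹'
          {z : (Fin d → ℝ) × ℝ | z.1 ∈ B ∧ z.2 ∈ Icc (0 : ℝ) 1 ∧ L * z.2 ≤ ψ z.1})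
          = Icc 0 (1 / L * ψ z) := by
        ext r
        have h1 : r ≤ 1 / L * ψ z ↔ L * r ≤ ψ z := by
          rw [one_div_mul_eq_div, le_div_iff₀ hL, mul_comm]
        simp only [mem_preimage, mem_setOf_eq, mem_Icc, h1, hz, true_and]
        constructor
        · rintro ⟨⟨a, b⟩, c⟩
          exact ⟨a, c⟩
        · rintro ⟨a, c⟩
          refine ⟨⟨a, ?_⟩, c⟩
          have := hψL z (hsub hz)
          by_contra hr
          nlinarith
      rw [this, Real.volume_Icc, sub_zero]
    · rw [indicator_of_notMem hz]
      simp [hz]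
  · refine (ae_restrict_iff' hB).2 (Filter.Eventually.of_forall fun z hz => ?_)
    exact mul_nonneg (by positivity) (hψ0 z (hsub hz))

/-- **Basic identities of the acceptance-rejection sampler** (with `s = d+1`):
(i) `λ(A) = C/L`; (ii) `λ(J_t*) = (1/L)∫_{[0,t)} ψ`; (iii) for any point set
`x_0,…,x_{M-1} ∈ [0,1]^s` with `N ≥ 1` accepted points whose projections onto the first
`s-1` coordinates are `y_0,…,y_{N-1}`, the local discrepancy of the `y`'s with respect to
the target `ψ/C` equals the local discrepancy of the `x`'s with respect to `J_t*`. -/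
theorem acceptance_rejection_identities (d : ℕ) (hd : 1 ≤ d)
    (L : ℝ) (hL : 0 < L) (ψ : (Fin d → ℝ) → ℝ) (hmeas : Measurable ψ)
    (hψ0 : ∀ z ∈ Icc (0 : Fin d → ℝ) 1, 0 ≤ ψ z)
    (hψL : ∀ z ∈ Icc (0 : Fin d → ℝ) 1, ψ z ≤ L)
    (C : ℝ) (hC : C = ∫ z in Icc (0 : Fin d → ℝ) 1, ψ z) (hCpos : 0 < C) :
    volume (graphRegion ψ L) = ENNReal.ofReal (C / L) ∧
    (∀ t ∈ Icc (0 : Fin d → ℝ) 1,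
      volume (Jstar ψ L t) = ENNReal.ofReal ((1 / L) * ∫ z in lowerBox t, ψ z)) ∧
    (∀ (M : ℕ) (x : Fin M → (Fin d → ℝ) × ℝ),
      (∀ n, x n ∈ (Icc (0 : Fin d → ℝ) 1) ×ˢ (Icc (0 : ℝ) 1)) →
      ∀ (N : ℕ), 1 ≤ N → N = Nat.card {n : Fin M // x n ∈ graphRegion ψ L} →
      ∀ (y : Fin N → (Fin d → ℝ)) (e : Fin N ≃ {n : Fin M // x n ∈ graphRegion ψ L}),
        (∀ k, y k = (x (e k)).1) →
        ∀ t ∈ Icc (0 : Fin d → ℝ) 1,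
          |(1 / (N : ℝ)) * ∑ k, (lowerBox t).indicator (fun _ => (1 : ℝ)) (y k)
              - (1 / C) * ∫ z in lowerBox t, ψ z|
            = |(1 / (N : ℝ)) * ∑ n, (Jstar ψ L t).indicator (fun _ => (1 : ℝ)) (x n)
              - (volume (Jstar ψ L t)).toReal / (volume (graphRegion ψ L)).toReal|) := by
  have h1 : volume (graphRegion ψ L) = ENNReal.ofReal (C / L) := by
    have := vol_aux L hL ψ hmeas hψ0 hψL (Icc 0 1) measurableSet_Icc subset_rfl
    rw [← hC, one_div_mul_eq_div] at this
    exact this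
  have hsub : ∀ t ∈ Icc (0 : Fin d → ℝ) 1, lowerBox t ⊆ Icc (0 : Fin d → ℝ) 1 :=
    fun t ht y hy => ⟨fun i => (hy i).1, fun i => (hy i).2.le.trans (ht.2 i)⟩
  have hmb : ∀ t : Fin d → ℝ, MeasurableSet (lowerBox t) := by
    intro t
    have : lowerBox t = Set.pi univ (fun i => Ico 0 (t i)) := by
      ext y
      simp [lowerBox]
    rw [this]
    exact MeasurableSet.univ_pi fun i => measurableSet_Ico
  have h2 : ∀ t ∈ Icc (0 : Fin d → ℝ) 1,
      volume (Jstar ψ L t) = ENNReal.ofReal ((1 / L) * ∫ z in lowerBox t, ψ z) := by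
    intro t ht
    rw [← vol_aux L hL ψ hmeas hψ0 hψL (lowerBox t) (hmb t) (hsub t ht)]
    congr 1
    ext z
    have := @hsub t ht z.1
    simp only [Jstar, graphRegion, mem_inter_iff, mem_prod, mem_setOf_eq]
    tauto
  refine ⟨h1, h2, ?_⟩
  intro M x hx N hN hcard y e hy t ht
  have hnn : 0 ≤ ∫ z in lowerBox t, ψ z :=
    setIntegral_nonneg (hmb t) fun z hz => hψ0 z (hsub t ht hz)
  have hsum : ∑ k, (lowerBox t).indicator (fun _ => (1 : ℝ)) (y k)
      = ∑ n, (Jstar ψ L t).indicator (fun _ => (1 : ℝ)) (x n) := by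
    classical
    have ha : ∀ k, (lowerBox t).indicator (fun _ => (1 : ℝ)) (y k)
        = (Jstar ψ L t).indicator (fun _ => (1 : ℝ)) (x (e k)) := by
      intro k
      have hk := (e k).2
      have : y k ∈ lowerBox t ↔ x (e k) ∈ Jstar ψ L t := by
        rw [hy k]
        exact ⟨fun h => ⟨⟨h, hk.2.1⟩, hk⟩, fun h => h.1.1⟩
      simp only [indicator_apply, this]
    rw [Finset.sum_congr rfl fun k _ => ha k,
      Equiv.sum_comp e fun n => (Jstar ψ L t).indicator (fun _ => (1 : ℝ)) (x n),
      ← Finset.sum_subtype (Finset.univ.filter fun n => x n ∈ graphRegion ψ L) (by simp)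
        (fun n => (Jstar ψ L t).indicator (fun _ => (1 : ℝ)) (x n))]
    refine Finset.sum_subset (Finset.subset_univ _) fun n _ hn => ?_
    refine indicator_of_notMem (fun h => hn ?_) _
    simpa using h.2
  rw [hsum, h1, h2 t ht, ENNReal.toReal_ofReal (by positivity),
    ENNReal.toReal_ofReal (by positivity)]
  congr 2
  field_simp
end

section
/- Let s ≥ 2, let ψ : [0,1]^{s-1} → ℝ≥0 be measurable with ψ ≤ L (0 < L < ∞), C = ∫_{[0,1]^{s-1}} ψ > 0, A = {z ∈ [0,1]^s : ψ(z_1,…,z_{s-1}) ≥ L z_s}, and assume ∂A admits an (s−1)-dimensional Minkowski content M_A ∈ (0,∞). For m ∈ ℕ let μ_m = ⊗_c Unif(Q_c) be the product of the uniform probability distributions on the M = m^s grid cubes Q_c, a probability measure on point configurations (x_c)_{c}. For a configuration, let N = #{c : x_c ∈ A} and let Y = (y_0,…,y_{N−1}) be the projections onto the first s−1 coordinates of those x_c lying in A. Then there exists m_0 such that for all m ≥ m_0, the weighted L_2 discrepancy satisfies E_{μ_m}[N² L_{2,N,ψ}²(Y)] ≤ 3 s^{1/2} M_A m^{s−1},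 where L_{2,N,ψ}(Y) = (∫_{[0,1]^{s-1}} |(1/N) Σ_{n=0}^{N−1} 1_{[0,t)}(y_n) − (1/C) ∫_{[0,t)} ψ|² dt)^{1/2}. -/
open MeasureTheory Set Filter

/-- The closed Euclidean `ε`-neighborhood of a set `E ⊆ ℝ^{d} × ℝ = ℝ^{d+1}`. -/
def euclNbhdP {d : ℕ} (E : Set ((Fin d → ℝ) × ℝ)) (ε : ℝ) : Set ((Fin d → ℝ) × ℝ) :=
  {x | ∃ y ∈ E, Real.sqrt ((∑ i, (x.1 i - y.1 i) ^ 2) + (x.2 - y.2) ^ 2) ≤ ε}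

/-- `∂A` admits the `(s-1)`-dimensional Minkowski content `M` (with `s = d+1`). -/
def HasMinkowskiContentP {d : ℕ} (A : Set ((Fin d → ℝ) × ℝ)) (M : ℝ) : Prop :=
  Tendsto (fun ε : ℝ => (volume (euclNbhdP (frontier A) ε)).toReal / (2 * ε))
    (nhdsWithin 0 (Set.Ioi 0)) (nhds M)

/-- The grid cube `Q_c = ∏_{j=1}^{d+1} [c_j/m, (c_j+1)/m)`. -/
def gridCubeP {d m : ℕ} (c : (Fin d → Fin m) × Fin m) : Set ((Fin d → ℝ) × ℝ) :=
  {z | (∀ i, (c.1 i : ℝ) / m ≤ z.1 i ∧ z.1 i < ((c.1 i : ℝ) + 1) / m) ∧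
       ((c.2 : ℝ) / m ≤ z.2 ∧ z.2 < ((c.2 : ℝ) + 1) / m)}

/-- The stratified-input measure `μ_m = ⊗_c Unif(Q_c)`: the product over all grid cubes of
the uniform probability distribution on `Q_c`. -/
noncomputable def stratifiedMeasure (d m : ℕ) :
    Measure (((Fin d → Fin m) × Fin m) → (Fin d → ℝ) × ℝ) :=
  Measure.pi fun c => (volume (gridCubeP c))⁻¹ • volume.restrict (gridCubeP c)


namespace StratAux

lemma gridCube_eq {d m : ℕ} (c : (Fin d → Fin m) × Fin m) :
    gridCubeP c = (Set.pi univ fun i => Ico ((c.1 i : ℝ) / m) (((c.1 i : ℝ) + 1) / m)) ×ˢ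
      Ico ((c.2 : ℝ) / m) (((c.2 : ℝ) + 1) / m) := by
  ext z
  simp [gridCubeP, Set.mem_prod, Set.mem_pi]

lemma measurableSet_gridCube {d m : ℕ} (c : (Fin d → Fin m) × Fin m) :
    MeasurableSet (gridCubeP c) := by
  rw [gridCube_eq]
  exact (MeasurableSet.univ_pi fun i => measurableSet_Ico).prod measurableSet_Ico

lemma volume_gridCube {d m : ℕ} (c : (Fin d → Fin m) × Fin m) :
    volume (gridCubeP c) = ENNReal.ofReal ((1 / (m : ℝ)) ^ (d + 1)) := by
  rw [gridCube_eq, Measure.volume_eq_prod, Measure.prod_prod, Real.volume_pi_Ico, Real.volume_Ico]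
  have h : ∀ k : Fin m, (((k : ℝ) + 1) / m - (k : ℝ) / m) = 1 / m := fun k => by ring
  simp only [h, Finset.prod_const, Finset.card_univ, Fintype.card_fin]
  rw [pow_succ, ENNReal.ofReal_mul (by positivity), ENNReal.ofReal_pow (by positivity)]

lemma convex_gridCube {d m : ℕ} (c : (Fin d → Fin m) × Fin m) :
    Convex ℝ (gridCubeP c) := by
  rw [gridCube_eq]
  exact (convex_pi fun i _ => convex_Ico _ _).prod (convex_Ico _ _)

lemma floor_lemma {m : ℕ} (hm : 0 < m) (k : Fin m) (x : ℝ) :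
    ((k : ℝ) / m ≤ x ∧ x < ((k : ℝ) + 1) / m) ↔ (⌊(m : ℝ) * x⌋ = (k : ℤ)) := by
  have hm' : (0 : ℝ) < m := by exact_mod_cast hm
  rw [Int.floor_eq_iff, div_le_iff₀' hm', lt_div_iff₀' hm']
  simp

lemma disjoint_gridCube {d m : ℕ} (hm : 0 < m) :
    Pairwise (Function.onFun Disjoint (gridCubeP (d := d) (m := m))) := by
  intro c c' hne
  rw [Function.onFun, Set.disjoint_left]
  intro z hz hz'
  apply hne
  simp only [gridCubeP, mem_ofPred_eq, floor_lemma hm] at hz hz'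
  refine Prod.ext (funext fun i => ?_) ?_
  · have := (hz.1 i).symm.trans (hz'.1 i)
    exact Fin.ext (by exact_mod_cast this)
  · have := hz.2.symm.trans hz'.2
    exact Fin.ext (by exact_mod_cast this)

lemma exists_fin {m : ℕ} (hm : 0 < m) {x : ℝ} (h0 : 0 ≤ x) (h1 : x < 1) :
    ∃ k : Fin m, ⌊(m : ℝ) * x⌋ = (k : ℤ) := by
  have hm' : (0 : ℝ) < m := by exact_mod_cast hm
  have h2 : 0 ≤ ⌊(m : ℝ) * x⌋ := Int.floor_nonneg.2 (by positivity)
  have h3 : ⌊(m : ℝ) * x⌋ < m := Int.floor_lt.2 (by push_cast; nlinarith)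
  exact ⟨⟨(⌊(m : ℝ) * x⌋).toNat, by omega⟩, by simp [h2]⟩

lemma fin_bounds {m : ℕ} (k : Fin m) {x : ℝ}
    (h : (k : ℝ) / m ≤ x ∧ x < ((k : ℝ) + 1) / m) : 0 ≤ x ∧ x < 1 := by
  have hm : 0 < m := k.pos
  have hm' : (0 : ℝ) < m := by exact_mod_cast hm
  have hk : (k : ℝ) + 1 ≤ m := by exact_mod_cast k.2
  refine ⟨le_trans (by positivity) h.1, lt_of_lt_of_le h.2 ?_⟩
  rw [div_le_one hm']; exact hk

lemma iUnion_gridCube {d m : ℕ} (hm : 0 < m) :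
    ⋃ c, gridCubeP (d := d) (m := m) c =
      (Set.pi univ fun _ : Fin d => Ico (0 : ℝ) 1) ×ˢ Ico (0 : ℝ) 1 := by
  ext z
  simp only [mem_iUnion, Set.mem_prod, Set.mem_pi, mem_univ, true_implies, mem_Ico]
  constructor
  · rintro ⟨c, hc⟩
    exact ⟨fun i => fin_bounds _ (hc.1 i), fin_bounds _ hc.2⟩
  · rintro ⟨h1, h2⟩
    choose k hk using fun i => exists_fin hm (h1 i).1 (h1 i).2
    obtain ⟨l, hl⟩ := exists_fin hm h2.1 h2.2
    exact ⟨(k, l), by simpa only [gridCubeP, mem_ofPred_eq, floor_lemma hm] using ⟨hk, hl⟩⟩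

lemma cube_dichotomy {d m : ℕ} (c : (Fin d → Fin m) × Fin m) (A : Set ((Fin d → ℝ) × ℝ))
    (h : ¬ (gridCubeP c ∩ frontier A).Nonempty) : gridCubeP c ⊆ A ∨ gridCubeP c ⊆ Aᶜ := by
  have hpre : IsPreconnected (gridCubeP c) := (convex_gridCube c).isPreconnected
  have hcov : gridCubeP c ⊆ interior A ∪ interior Aᶜ := by
    intro z hz
    by_contra hcon
    apply h
    refine ⟨z, hz, ?_⟩
    rw [mem_union, not_or] at hcon
    rw [interior_compl, mem_compl_iff, not_not] at hcon
    exact ⟨hcon.2, hcon.1⟩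
  rcases hpre.subset_or_subset isOpen_interior isOpen_interior
    (disjoint_compl_right.mono interior_subset interior_subset) hcov with h1 | h1
  · exact Or.inl (h1.trans interior_subset)
  · exact Or.inr (h1.trans interior_subset)

lemma cube_subset_nbhd {d m : ℕ} (c : (Fin d → Fin m) × Fin m) (E : Set ((Fin d → ℝ) × ℝ))
    (h : (gridCubeP c ∩ E).Nonempty) :
    gridCubeP c ⊆ euclNbhdP E (Real.sqrt (d + 1) / m) := by
  obtain ⟨y, hy, hyE⟩ := h
  intro x hx
  refine ⟨y, hyE, ?_⟩
  have hm' : (0 : ℝ) < m := by exact_mod_cast c.2.pos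
  have key : ∀ (k : Fin m) (a b : ℝ), (k : ℝ) / m ≤ a ∧ a < ((k : ℝ) + 1) / m →
      (k : ℝ) / m ≤ b ∧ b < ((k : ℝ) + 1) / m → (a - b) ^ 2 ≤ (1 / (m : ℝ)) ^ 2 := by
    intro k a b ha hb
    have : ((k : ℝ) + 1) / m = (k : ℝ) / m + 1 / m := by ring
    rw [this] at ha hb
    apply sq_le_sq'
    · linarith [ha.1, hb.2]
    · linarith [ha.2, hb.1]
  apply Real.sqrt_le_iff.2
  refine ⟨by positivity, ?_⟩
  have h1 : ∑ i, (x.1 i - y.1 i) ^ 2 ≤ ∑ i : Fin d, (1 / (m : ℝ)) ^ 2 :=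
    Finset.sum_le_sum fun i _ => key _ _ _ (hx.1 i) (hy.1 i)
  have h2 := key _ _ _ hx.2 hy.2
  rw [div_pow, Real.sq_sqrt (by positivity)]
  simp only [Finset.sum_const, Finset.card_univ, Fintype.card_fin, nsmul_eq_mul] at h1
  calc _ ≤ (d : ℝ) * (1 / (m : ℝ)) ^ 2 + (1 / (m : ℝ)) ^ 2 := add_le_add h1 h2
    _ = _ := by ring

lemma nbhd_bounded {d : ℕ} (E : Set ((Fin d → ℝ) × ℝ)) (hE : Bornology.IsBounded E) (ε : ℝ) :
    Bornology.IsBounded (euclNbhdP E ε) := by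
  apply (hE.cthickening (δ := ε)).subset
  rintro x ⟨y, hy, hxy⟩
  have hε : 0 ≤ ε := (Real.sqrt_nonneg _).trans hxy
  apply Metric.mem_cthickening_of_dist_le x y ε E hy
  have h1 := (Real.sqrt_le_left hε).1 hxy
  have hs : 0 ≤ ∑ i, (x.1 i - y.1 i) ^ 2 := Finset.sum_nonneg fun i _ => sq_nonneg _
  rw [Prod.dist_eq, max_le_iff, dist_pi_le_iff hε]
  refine ⟨fun i => ?_, ?_⟩
  · rw [Real.dist_eq]
    apply abs_le_of_sq_le_sq _ hε
    have := Finset.single_le_sum (f := fun i => (x.1 i - y.1 i) ^ 2)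
      (fun i _ => sq_nonneg _) (Finset.mem_univ i)
    nlinarith [sq_nonneg (x.2 - y.2)]
  · rw [Real.dist_eq]
    apply abs_le_of_sq_le_sq _ hε
    linarith

lemma graph_subset {d : ℕ} (ψ : (Fin d → ℝ) → ℝ) (L : ℝ) :
    graphRegion ψ L ⊆ Icc 0 1 ×ˢ Icc 0 1 := fun _ hz => ⟨hz.1, hz.2.1⟩

lemma frontier_bounded {d : ℕ} (ψ : (Fin d → ℝ) → ℝ) (L : ℝ) :
    Bornology.IsBounded (frontier (graphRegion ψ L)) := by
  have : Bornology.IsBounded (graphRegion ψ L) :=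
    ((Metric.isBounded_Icc _ _).prod (Metric.isBounded_Icc _ _)).subset (graph_subset ψ L)
  exact this.closure.subset frontier_subset_closure

lemma nbhd_finite {d : ℕ} (ψ : (Fin d → ℝ) → ℝ) (L ε : ℝ) :
    volume (euclNbhdP (frontier (graphRegion ψ L)) ε) ≠ ⊤ :=
  (nbhd_bounded _ (frontier_bounded ψ L) ε).measure_lt_top.ne

lemma bottom_frontier {d : ℕ} (ψ : (Fin d → ℝ) → ℝ) (L : ℝ)
    (hψ0 : ∀ z ∈ Icc (0 : Fin d → ℝ) 1, 0 ≤ ψ z) (z : Fin d → ℝ) (hz : z ∈ Icc (0 : Fin d → ℝ) 1) :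
    (z, (0 : ℝ)) ∈ frontier (graphRegion ψ L) := by
  refine ⟨subset_closure ⟨hz, by simp, by simpa using hψ0 z hz⟩, ?_⟩
  intro hint
  have hcont : Tendsto (fun y : ℝ => (z, y)) (nhds 0) (nhds (z, (0 : ℝ))) :=
    (Continuous.prodMk_right z).tendsto 0
  have hev := hcont.eventually (mem_interior_iff_mem_nhds.1 hint)
  have hev2 : ∀ᶠ y in nhdsWithin (0 : ℝ) (Iio 0), (z, y) ∈ graphRegion ψ L :=
    hev.filter_mono nhdsWithin_le_nhds
  obtain ⟨y, hy, hy0⟩ := (hev2.and self_mem_nhdsWithin).exists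
  exact absurd hy.2.1.1 (not_le.2 hy0)

lemma one_le_content {d : ℕ} (ψ : (Fin d → ℝ) → ℝ) (L : ℝ)
    (hψ0 : ∀ z ∈ Icc (0 : Fin d → ℝ) 1, 0 ≤ ψ z) (MA : ℝ)
    (hMink : HasMinkowskiContentP (graphRegion ψ L) MA) : 1 ≤ MA := by
  apply ge_of_tendsto hMink
  filter_upwards [self_mem_nhdsWithin] with ε hε
  have hε : 0 < ε := hε
  rw [le_div_iff₀ (by positivity), one_mul]
  have hsub : Icc (0 : Fin d → ℝ) 1 ×ˢ Icc (-ε) ε ⊆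
      euclNbhdP (frontier (graphRegion ψ L)) ε := by
    rintro ⟨z, y⟩ ⟨hz, hy⟩
    refine ⟨(z, 0), bottom_frontier ψ L hψ0 z hz, ?_⟩
    simp only [sub_self, ne_eq, OfNat.ofNat_ne_zero, not_false_eq_true, zero_pow,
      Finset.sum_const_zero, zero_add, sub_zero, Real.sqrt_sq_eq_abs]
    exact abs_le.2 hy
  have hv : volume (Icc (0 : Fin d → ℝ) 1 ×ˢ Icc (-ε) ε) = ENNReal.ofReal (2 * ε) := by
    rw [Measure.volume_eq_prod, Measure.prod_prod, Real.volume_Icc_pi, Real.volume_Icc]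
    simp [two_mul]
  have := measureReal_mono hsub (nbhd_finite ψ L ε)
  rw [measureReal_def, measureReal_def, hv, ENNReal.toReal_ofReal (by positivity)] at this
  exact this

open Classical in
lemma count_boundary {d m : ℕ} (hm : 0 < m) (ψ : (Fin d → ℝ) → ℝ) (L : ℝ) :
    (∑ c : (Fin d → Fin m) × Fin m,
      if (gridCubeP c ∩ frontier (graphRegion ψ L)).Nonempty then (1 : ℝ) else 0) ≤
    (m : ℝ) ^ (d + 1) *
      (volume (euclNbhdP (frontier (graphRegion ψ L)) (Real.sqrt (d + 1) / m))).toReal := by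
  have hm' : (0 : ℝ) < m := by exact_mod_cast hm
  rw [← Finset.sum_filter]
  set S := Finset.univ.filter fun c : (Fin d → Fin m) × Fin m =>
    (gridCubeP c ∩ frontier (graphRegion ψ L)).Nonempty
  have hsub : (⋃ c ∈ S, gridCubeP c) ⊆
      euclNbhdP (frontier (graphRegion ψ L)) (Real.sqrt (d + 1) / m) := by
    refine iUnion₂_subset fun c hc => cube_subset_nbhd c _ ?_
    exact (Finset.mem_filter.1 hc).2
  have h1 := measureReal_mono hsub (nbhd_finite ψ L _)
  rw [measureReal_biUnion_finset (fun c _ c' _ hne => disjoint_gridCube hm hne)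
    (fun c _ => measurableSet_gridCube c)
    (fun c _ => by rw [volume_gridCube]; exact ENNReal.ofReal_ne_top)] at h1
  · simp only [measureReal_def, volume_gridCube] at h1
    rw [ENNReal.toReal_ofReal (by positivity)] at h1
    calc _ = (m : ℝ) ^ (d + 1) * ∑ c ∈ S, (1 / (m : ℝ)) ^ (d + 1) := by
          rw [Finset.mul_sum]
          refine Finset.sum_congr rfl fun _ _ => ?_
          rw [← mul_pow, mul_one_div_cancel hm'.ne', one_pow]
      _ ≤ _ := by gcongr

/-- the (real) uniform measure on a cube -/
noncomputable def unif {d m : ℕ} (c : (Fin d → Fin m) × Fin m) : Measure ((Fin d → ℝ) × ℝ) :=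
  (volume (gridCubeP c))⁻¹ • volume.restrict (gridCubeP c)

lemma volume_ne_zero {d m : ℕ} (c : (Fin d → Fin m) × Fin m) : volume (gridCubeP c) ≠ 0 := by
  have hm' : (0 : ℝ) < m := by exact_mod_cast c.2.pos
  rw [volume_gridCube]
  simp only [ne_eq, ENNReal.ofReal_eq_zero, not_le]
  positivity

lemma volume_ne_top {d m : ℕ} (c : (Fin d → Fin m) × Fin m) : volume (gridCubeP c) ≠ ⊤ := by
  rw [volume_gridCube]; exact ENNReal.ofReal_ne_top

instance {d m : ℕ} (c : (Fin d → Fin m) × Fin m) : IsProbabilityMeasure (unif c) := by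
  constructor
  simp only [unif, Measure.smul_apply, Measure.restrict_apply_univ, smul_eq_mul]
  exact ENNReal.inv_mul_cancel (volume_ne_zero c) (volume_ne_top c)

lemma unif_ae_mem {d m : ℕ} (c : (Fin d → Fin m) × Fin m) : ∀ᵐ z ∂(unif c), z ∈ gridCubeP c := by
  apply Measure.ae_smul_measure
  exact ae_restrict_mem (measurableSet_gridCube c)

lemma integral_unif {d m : ℕ} (c : (Fin d → Fin m) × Fin m) (f : (Fin d → ℝ) × ℝ → ℝ) :
    ∫ z, f z ∂(unif c) = (m : ℝ) ^ (d + 1) * ∫ z in gridCubeP c, f z := by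
  have hm' : (0 : ℝ) < m := by exact_mod_cast c.2.pos
  rw [unif, integral_smul_measure, volume_gridCube, ENNReal.toReal_inv,
    ENNReal.toReal_ofReal (by positivity), smul_eq_mul, one_div, inv_pow, inv_inv]

lemma sum_integral_unif {d m : ℕ} (hm : 0 < m) (f : (Fin d → ℝ) × ℝ → ℝ)
    (hf : IntegrableOn f ((Set.pi univ fun _ : Fin d => Ico (0 : ℝ) 1) ×ˢ Ico (0 : ℝ) 1)) :
    ∑ c : (Fin d → Fin m) × Fin m, ∫ z, f z ∂(unif c) = (m : ℝ) ^ (d + 1) *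
      ∫ z in (Set.pi univ fun _ : Fin d => Ico (0 : ℝ) 1) ×ˢ Ico (0 : ℝ) 1, f z := by
  simp_rw [integral_unif]
  rw [← Finset.mul_sum, ← iUnion_gridCube hm, integral_iUnion_fintype
    (fun c => measurableSet_gridCube c) (disjoint_gridCube hm)]
  intro c
  apply hf.mono_set
  rw [← iUnion_gridCube hm]
  exact subset_iUnion _ c

/-- the centred test function -/
noncomputable def hfun {d : ℕ} (ψ : (Fin d → ℝ) → ℝ) (L : ℝ) (p : ℝ) (t : Fin d → ℝ)
    (z : (Fin d → ℝ) × ℝ) : ℝ :=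
  (Jstar ψ L t).indicator (fun _ => (1 : ℝ)) z - p * (graphRegion ψ L).indicator (fun _ => (1 : ℝ)) z

lemma measurable_graph {d : ℕ} (ψ : (Fin d → ℝ) → ℝ) (hmeas : Measurable ψ) (L : ℝ) :
    MeasurableSet (graphRegion ψ L) := by
  have h1 : MeasurableSet {z : (Fin d → ℝ) × ℝ | z.1 ∈ Icc (0 : Fin d → ℝ) 1} :=
    measurable_fst measurableSet_Icc
  have h2 : MeasurableSet {z : (Fin d → ℝ) × ℝ | z.2 ∈ Icc (0 : ℝ) 1} :=
    measurable_snd measurableSet_Icc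
  have h3 : MeasurableSet {z : (Fin d → ℝ) × ℝ | L * z.2 ≤ ψ z.1} :=
    measurableSet_le (measurable_snd.const_mul L) (hmeas.comp measurable_fst)
  exact h1.inter (h2.inter h3)

lemma measurable_box_joint {d : ℕ} :
    MeasurableSet {q : (Fin d → ℝ) × (Fin d → ℝ) | q.1 ∈ lowerBox q.2} := by
  have : {q : (Fin d → ℝ) × (Fin d → ℝ) | q.1 ∈ lowerBox q.2} =
      ⋂ i, ({q | 0 ≤ q.1 i} ∩ {q | q.1 i < q.2 i}) := by
    ext q; simp [lowerBox]
  rw [this]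
  refine MeasurableSet.iInter fun i => ?_
  exact (measurableSet_le (by fun_prop) (by fun_prop)).inter
    (measurableSet_lt (by fun_prop) (by fun_prop))

lemma measurable_box {d : ℕ} (t : Fin d → ℝ) : MeasurableSet (lowerBox t) :=
  (measurable_box_joint (d := d)).preimage (measurable_id.prodMk (measurable_const (a := t)))

lemma measurable_J_joint {d : ℕ} (ψ : (Fin d → ℝ) → ℝ) (hmeas : Measurable ψ) (L : ℝ) :
    MeasurableSet {q : ((Fin d → ℝ) × ℝ) × (Fin d → ℝ) | q.1 ∈ Jstar ψ L q.2} := by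
  have h1 : MeasurableSet {q : ((Fin d → ℝ) × ℝ) × (Fin d → ℝ) | q.1.1 ∈ lowerBox q.2} :=
    measurable_box_joint.preimage ((measurable_fst.comp measurable_fst).prodMk measurable_snd)
  have h2 : MeasurableSet {q : ((Fin d → ℝ) × ℝ) × (Fin d → ℝ) | q.1.2 ∈ Icc (0 : ℝ) 1} :=
    (measurable_snd.comp measurable_fst) measurableSet_Icc
  have h3 : MeasurableSet {q : ((Fin d → ℝ) × ℝ) × (Fin d → ℝ) | q.1 ∈ graphRegion ψ L} :=
    measurable_fst (measurable_graph ψ hmeas L)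
  exact (h1.inter h2).inter h3

lemma measurable_p {d : ℕ} (ψ : (Fin d → ℝ) → ℝ) (hmeas : Measurable ψ) (C : ℝ) :
    Measurable fun t : Fin d → ℝ => (1 / C) * ∫ z in lowerBox t, ψ z := by
  apply Measurable.const_mul
  have : (fun t : Fin d → ℝ => ∫ z in lowerBox t, ψ z) =
      fun t => ∫ z, ({q : (Fin d → ℝ) × (Fin d → ℝ) | q.1 ∈ lowerBox q.2}.indicator
        (fun q => ψ q.1)) (z, t) := by
    funext t
    rw [← integral_indicator (measurable_box t)]
    rfl
  rw [this]
  apply StronglyMeasurable.measurable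
  apply StronglyMeasurable.integral_prod_left'
    (f := {q : (Fin d → ℝ) × (Fin d → ℝ) | q.1 ∈ lowerBox q.2}.indicator (fun q => ψ q.1))
  exact ((hmeas.comp measurable_fst).indicator measurable_box_joint).stronglyMeasurable

lemma measurable_h_joint {d : ℕ} (ψ : (Fin d → ℝ) → ℝ) (hmeas : Measurable ψ) (L : ℝ)
    (p : (Fin d → ℝ) → ℝ) (hp : Measurable p) :
    Measurable fun q : ((Fin d → ℝ) × ℝ) × (Fin d → ℝ) => hfun ψ L (p q.2) q.2 q.1 := by
  unfold hfun
  refine Measurable.sub ?_ (Measurable.mul (hp.comp measurable_snd) ?_)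
  · exact (measurable_const (a := (1 : ℝ))).indicator (measurable_J_joint ψ hmeas L)
  · exact ((measurable_const (a := (1 : ℝ))).indicator (measurable_graph ψ hmeas L)).comp
      measurable_fst

lemma measurable_h {d : ℕ} (ψ : (Fin d → ℝ) → ℝ) (hmeas : Measurable ψ) (L : ℝ)
    (p : ℝ) (t : Fin d → ℝ) : Measurable (hfun ψ L p t) :=
  (measurable_h_joint ψ hmeas L (fun _ => p) measurable_const).comp
    (measurable_id.prodMk (measurable_const (a := t)))

lemma h_bound {d : ℕ} (ψ : (Fin d → ℝ) → ℝ) (L : ℝ)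
    (p : ℝ) (hp : p ∈ Icc (0 : ℝ) 1) (t : Fin d → ℝ) (z : (Fin d → ℝ) × ℝ) :
    hfun ψ L p t z ∈ Icc (-1 : ℝ) 1 := by
  obtain ⟨h0, h1⟩ := hp
  unfold hfun
  by_cases hJ : z ∈ Jstar ψ L t <;> by_cases hA : z ∈ graphRegion ψ L <;>
    simp [hJ, hA] <;> constructor <;> linarith

lemma box_subset {d : ℕ} {t : Fin d → ℝ} (ht : t ∈ Icc (0 : Fin d → ℝ) 1) :
    lowerBox t ⊆ Set.pi univ fun _ : Fin d => Ico (0 : ℝ) 1 := by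
  intro z hz i _
  exact ⟨(hz i).1, (hz i).2.trans_le (ht.2 i)⟩

lemma pi_subset {d : ℕ} : (Set.pi univ fun _ : Fin d => Ico (0 : ℝ) 1) ⊆ Icc 0 1 := by
  intro z hz
  exact ⟨fun i => (hz i trivial).1, fun i => (hz i trivial).2.le⟩

lemma integrable_psi {d : ℕ} (ψ : (Fin d → ℝ) → ℝ) (hmeas : Measurable ψ) (L : ℝ)
    (hψ0 : ∀ z ∈ Icc (0 : Fin d → ℝ) 1, 0 ≤ ψ z)
    (hψL : ∀ z ∈ Icc (0 : Fin d → ℝ) 1, ψ z ≤ L) : IntegrableOn ψ (Icc 0 1) := by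
  apply Measure.integrableOn_of_bounded (M := L)
  · exact isCompact_Icc.measure_lt_top.ne
  · exact hmeas.aestronglyMeasurable
  · filter_upwards [ae_restrict_mem measurableSet_Icc] with z hz
    rw [Real.norm_eq_abs, abs_of_nonneg (hψ0 z hz)]
    exact hψL z hz

lemma integral_pi_eq {d : ℕ} (ψ : (Fin d → ℝ) → ℝ) :
    ∫ z in Set.pi univ fun _ : Fin d => Ico (0 : ℝ) 1, ψ z = ∫ z in Icc (0 : Fin d → ℝ) 1, ψ z := by
  apply setIntegral_congr_set
  exact Measure.univ_pi_Ico_ae_eq_Icc (μ := fun _ : Fin d => (volume : Measure ℝ))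
    (f := (0 : Fin d → ℝ)) (g := 1)

lemma p_mem {d : ℕ} (ψ : (Fin d → ℝ) → ℝ) (hmeas : Measurable ψ) (L : ℝ)
    (hψ0 : ∀ z ∈ Icc (0 : Fin d → ℝ) 1, 0 ≤ ψ z)
    (hψL : ∀ z ∈ Icc (0 : Fin d → ℝ) 1, ψ z ≤ L)
    (C : ℝ) (hC : C = ∫ z in Icc (0 : Fin d → ℝ) 1, ψ z) (hCpos : 0 < C)
    (t : Fin d → ℝ) (ht : t ∈ Icc (0 : Fin d → ℝ) 1) :
    (1 / C) * ∫ z in lowerBox t, ψ z ∈ Icc (0 : ℝ) 1 := by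
  have hsub := (box_subset ht).trans pi_subset
  have h0 : 0 ≤ ∫ z in lowerBox t, ψ z :=
    setIntegral_nonneg (measurable_box t) fun z hz => hψ0 z (hsub hz)
  have h1 : ∫ z in lowerBox t, ψ z ≤ C := by
    rw [hC]
    apply setIntegral_mono_set (integrable_psi ψ hmeas L hψ0 hψL)
    · filter_upwards [ae_restrict_mem measurableSet_Icc] with z hz using hψ0 z hz
    · exact hsub.eventuallyLE
  refine ⟨by positivity, ?_⟩
  rw [one_div, inv_mul_le_iff₀ hCpos]
  linarith

lemma h_eq {d : ℕ} (ψ : (Fin d → ℝ) → ℝ) (L p : ℝ) (t : Fin d → ℝ) (z : (Fin d → ℝ) × ℝ) :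
    hfun ψ L p t z = ((lowerBox t).indicator (fun _ => (1 : ℝ)) z.1 - p) *
      (graphRegion ψ L).indicator (fun _ => (1 : ℝ)) z := by
  unfold hfun
  by_cases hA : z ∈ graphRegion ψ L
  · have : z ∈ Jstar ψ L t ↔ z.1 ∈ lowerBox t := by
      simp only [Jstar, mem_inter_iff, Set.mem_prod]
      exact ⟨fun h => h.1.1, fun h => ⟨⟨h, hA.2.1⟩, hA⟩⟩
    by_cases hB : z.1 ∈ lowerBox t <;> simp [hA, this, hB]
  · have : z ∉ Jstar ψ L t := fun h => hA h.2
    simp [hA, this]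

lemma inner_integral {d : ℕ} (ψ : (Fin d → ℝ) → ℝ) (L : ℝ) (hL : 0 < L)
    (hψ0 : ∀ z ∈ Icc (0 : Fin d → ℝ) 1, 0 ≤ ψ z)
    (hψL : ∀ z ∈ Icc (0 : Fin d → ℝ) 1, ψ z ≤ L) (z : Fin d → ℝ)
    (hz : z ∈ Icc (0 : Fin d → ℝ) 1) :
    ∫ y in Ico (0 : ℝ) 1, (graphRegion ψ L).indicator (fun _ => (1 : ℝ)) (z, y) = ψ z / L := by
  rw [integral_Ico_eq_integral_Ioo, ← integral_Icc_eq_integral_Ioo]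
  have h : ∀ y ∈ Icc (0 : ℝ) 1, (graphRegion ψ L).indicator (fun _ => (1 : ℝ)) (z, y) =
      (Icc 0 (ψ z / L)).indicator (fun _ => (1 : ℝ)) y := by
    intro y hy
    have : (z, y) ∈ graphRegion ψ L ↔ y ∈ Icc 0 (ψ z / L) := by
      rw [mem_Icc, le_div_iff₀' hL]
      exact ⟨fun h => ⟨hy.1, h.2.2⟩, fun h => ⟨hz, hy, h.2⟩⟩
    by_cases hy2 : y ∈ Icc 0 (ψ z / L)
    · rw [indicator_of_mem hy2, indicator_of_mem (this.2 hy2)]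
    · rw [indicator_of_notMem hy2, indicator_of_notMem (fun h => hy2 (this.1 h))]
  rw [setIntegral_congr_fun measurableSet_Icc h, setIntegral_indicator measurableSet_Icc]
  have hle : ψ z / L ≤ 1 := (div_le_one hL).2 (hψL z hz)
  have h0 : 0 ≤ ψ z / L := div_nonneg (hψ0 z hz) hL.le
  rw [inter_eq_self_of_subset_right (Icc_subset_Icc_right hle)]
  simp [h0]

lemma mean_zero {d : ℕ} (ψ : (Fin d → ℝ) → ℝ) (hmeas : Measurable ψ) (L : ℝ) (hL : 0 < L)
    (hψ0 : ∀ z ∈ Icc (0 : Fin d → ℝ) 1, 0 ≤ ψ z)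
    (hψL : ∀ z ∈ Icc (0 : Fin d → ℝ) 1, ψ z ≤ L)
    (C : ℝ) (hC : C = ∫ z in Icc (0 : Fin d → ℝ) 1, ψ z) (hCpos : 0 < C)
    (t : Fin d → ℝ) (ht : t ∈ Icc (0 : Fin d → ℝ) 1) {p : ℝ}
    (hp : p = (1 / C) * ∫ z in lowerBox t, ψ z) :
    IntegrableOn (hfun ψ L p t) ((Set.pi univ fun _ : Fin d => Ico (0 : ℝ) 1) ×ˢ Ico (0 : ℝ) 1) ∧
    ∫ z in (Set.pi univ fun _ : Fin d => Ico (0 : ℝ) 1) ×ˢ Ico (0 : ℝ) 1, hfun ψ L p t z = 0 := by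
  have hpm : p ∈ Icc (0 : ℝ) 1 := by
    rw [hp]; exact p_mem ψ hmeas L hψ0 hψL C hC hCpos t ht
  have hint : IntegrableOn (hfun ψ L p t)
      ((Set.pi univ fun _ : Fin d => Ico (0 : ℝ) 1) ×ˢ Ico (0 : ℝ) 1) := by
    apply Measure.integrableOn_of_bounded (M := 1)
    · apply ((measure_mono (Set.prod_mono pi_subset Ico_subset_Icc_self)).trans_lt
        (isCompact_Icc.prod isCompact_Icc).measure_lt_top).ne
    · exact (measurable_h ψ hmeas L p t).aestronglyMeasurable
    · exact ae_of_all _ fun z => by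
        rw [Real.norm_eq_abs]; exact abs_le.2 (h_bound ψ L p hpm t z)
  refine ⟨hint, ?_⟩
  have hpi : MeasurableSet (Set.pi univ fun _ : Fin d => Ico (0 : ℝ) 1) :=
    MeasurableSet.univ_pi fun i => measurableSet_Ico
  rw [Measure.volume_eq_prod, setIntegral_prod _ hint]
  have h1 : ∀ z ∈ (Set.pi univ fun _ : Fin d => Ico (0 : ℝ) 1),
      ∫ y in Ico (0 : ℝ) 1, hfun ψ L p t (z, y) =
        (1 / L) * ((lowerBox t).indicator ψ z - p * ψ z) := by
    intro z hz
    simp_rw [h_eq]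
    rw [integral_const_mul, inner_integral ψ L hL hψ0 hψL z (pi_subset hz)]
    by_cases hB : z ∈ lowerBox t <;> simp [hB] <;> ring
  rw [setIntegral_congr_fun hpi h1, integral_const_mul]
  have hi : IntegrableOn ψ (Set.pi univ fun _ : Fin d => Ico (0 : ℝ) 1) :=
    (integrable_psi ψ hmeas L hψ0 hψL).mono_set pi_subset
  rw [integral_sub (hi.indicator (measurable_box t)) (hi.const_mul p), integral_const_mul,
    integral_pi_eq ψ, ← hC, setIntegral_indicator (measurable_box t),
    inter_eq_self_of_subset_right (box_subset ht), hp]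
  field_simp
  simp

lemma var_const {d m : ℕ} (c : (Fin d → Fin m) × Fin m) (f : (Fin d → ℝ) × ℝ → ℝ) (a : ℝ)
    (hf : ∀ z ∈ gridCubeP c, f z = a) : ProbabilityTheory.variance f (unif c) = 0 := by
  have h : f =ᵐ[unif c] fun _ => a := by
    filter_upwards [unif_ae_mem c] with z hz using hf z hz
  rw [ProbabilityTheory.variance_congr h]
  rw [ProbabilityTheory.variance_eq_integral aemeasurable_const]
  simp

/-- corner strictly below -/
def setU {d m : ℕ} (c : (Fin d → Fin m) × Fin m) : Set (Fin d → ℝ) :=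
  {t | ∀ j, (c.1 j : ℝ) / m < t j}

/-- corner above -/
def setV {d m : ℕ} (c : (Fin d → Fin m) × Fin m) : Set (Fin d → ℝ) :=
  {t | ∀ j, ((c.1 j : ℝ) + 1) / m ≤ t j}

lemma V_subset_U {d m : ℕ} (c : (Fin d → Fin m) × Fin m) : setV c ⊆ setU c := by
  intro t ht j
  have hm' : (0 : ℝ) < m := by exact_mod_cast c.2.pos
  refine lt_of_lt_of_le ?_ (ht j)
  gcongr
  linarith

/-- crossing indicator -/
noncomputable def Kf {d m : ℕ} (c : (Fin d → Fin m) × Fin m) (t : Fin d → ℝ) : ℝ :=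
  (setU c).indicator (fun _ => (1 : ℝ)) t - (setV c).indicator (fun _ => (1 : ℝ)) t

lemma Kf_nonneg {d m : ℕ} (c : (Fin d → Fin m) × Fin m) (t : Fin d → ℝ) : 0 ≤ Kf c t := by
  unfold Kf
  by_cases hV : t ∈ setV c
  · simp [hV, V_subset_U c hV]
  · by_cases hU : t ∈ setU c <;> simp [hV, hU]

open Classical in
lemma var_bound {d m : ℕ} (c : (Fin d → Fin m) × Fin m)
    (ψ : (Fin d → ℝ) → ℝ) (hmeas : Measurable ψ) (L : ℝ)
    (p : ℝ) (hp : p ∈ Icc (0 : ℝ) 1) (t : Fin d → ℝ) :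
    ProbabilityTheory.variance (hfun ψ L p t) (unif c) ≤
      (if (gridCubeP c ∩ frontier (graphRegion ψ L)).Nonempty then (1 : ℝ) else 0) + Kf c t := by
  have hle : ProbabilityTheory.variance (hfun ψ L p t) (unif c) ≤ 1 := by
    have := ProbabilityTheory.variance_le_sq_of_bounded (μ := unif c) (a := -1) (b := 1)
      (X := hfun ψ L p t) (ae_of_all _ fun z => h_bound ψ L p hp t z)
      (measurable_h ψ hmeas L p t).aemeasurable
    norm_num at this
    exact this
  have hK := Kf_nonneg c t
  by_cases hB : (gridCubeP c ∩ frontier (graphRegion ψ L)).Nonempty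
  · rw [if_pos hB]; linarith
  rw [if_neg hB, zero_add]
  rcases cube_dichotomy c _ hB with hA | hA
  · by_cases hV : t ∈ setV c
    · rw [var_const c _ (1 - p)]
      · exact hK
      · intro z hz
        have : z.1 ∈ lowerBox t := fun i =>
          ⟨(fin_bounds _ (hz.1 i)).1, (hz.1 i).2.trans_le (hV i)⟩
        rw [h_eq]
        simp [this, hA hz]
    by_cases hU : t ∈ setU c
    · have : Kf c t = 1 := by simp [Kf, hU, hV]
      rw [this]; exact hle
    · rw [var_const c _ (- p)]
      · exact hK
      · intro z hz
        have : z.1 ∉ lowerBox t := fun h => hU fun j => (hz.1 j).1.trans_lt (h j).2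
        rw [h_eq]
        simp [this, hA hz]
  · rw [var_const c _ 0]
    · exact hK
    · intro z hz
      have := hA hz
      rw [mem_compl_iff] at this
      rw [h_eq]
      simp [this]

lemma measurableSet_U {d m : ℕ} (c : (Fin d → Fin m) × Fin m) : MeasurableSet (setU c) := by
  have : setU c = ⋂ j, {t | (c.1 j : ℝ) / m < t j} := by ext; simp [setU]
  rw [this]
  exact MeasurableSet.iInter fun j => measurableSet_lt (by fun_prop) (by fun_prop)

lemma measurableSet_V {d m : ℕ} (c : (Fin d → Fin m) × Fin m) : MeasurableSet (setV c) := by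
  have : setV c = ⋂ j, {t | ((c.1 j : ℝ) + 1) / m ≤ t j} := by ext; simp [setV]
  rw [this]
  exact MeasurableSet.iInter fun j => measurableSet_le (by fun_prop) (by fun_prop)

lemma fin_div_nonneg {m : ℕ} (k : Fin m) : 0 ≤ (k : ℝ) / m := by positivity

lemma fin_div_le {m : ℕ} (k : Fin m) : ((k : ℝ) + 1) / m ≤ 1 := by
  have hm' : (0 : ℝ) < m := by exact_mod_cast k.pos
  rw [div_le_one hm']
  exact_mod_cast k.2

lemma integrableOn_ind {d : ℕ} (S : Set (Fin d → ℝ)) (hS : MeasurableSet S) :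
    IntegrableOn (S.indicator fun _ => (1 : ℝ)) (Icc (0 : Fin d → ℝ) 1) :=
  Integrable.indicator (integrableOn_const isCompact_Icc.measure_lt_top.ne) hS

lemma integrable_Kf {d m : ℕ} (c : (Fin d → Fin m) × Fin m) :
    IntegrableOn (Kf c) (Icc (0 : Fin d → ℝ) 1) :=
  (integrableOn_ind _ (measurableSet_U c)).sub (integrableOn_ind _ (measurableSet_V c))

lemma integral_Kf {d m : ℕ} (c : (Fin d → Fin m) × Fin m) :
    ∫ t in Icc (0 : Fin d → ℝ) 1, Kf c t =
      ∏ j, (1 - (c.1 j : ℝ) / m) - ∏ j, (1 - ((c.1 j : ℝ) + 1) / m) := by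
  have hU : Icc (0 : Fin d → ℝ) 1 ∩ setU c =
      Set.pi univ fun j => Ioc ((c.1 j : ℝ) / m) ((1 : Fin d → ℝ) j) := by
    ext t
    simp only [mem_inter_iff, mem_Icc, Set.mem_pi, mem_univ, true_implies, mem_Ioc]
    constructor
    · rintro ⟨⟨_, h1⟩, h2⟩ j
      exact ⟨h2 j, h1 j⟩
    · intro h
      exact ⟨⟨fun j => (fin_div_nonneg _).trans (h j).1.le, fun j => (h j).2⟩, fun j => (h j).1⟩
  have hV : Icc (0 : Fin d → ℝ) 1 ∩ setV c = Icc (fun j => ((c.1 j : ℝ) + 1) / m) 1 := by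
    ext t
    simp only [mem_inter_iff, mem_Icc]
    constructor
    · rintro ⟨⟨_, h1⟩, h2⟩
      exact ⟨h2, h1⟩
    · intro h
      exact ⟨⟨fun j => le_trans (by positivity) (h.1 j), h.2⟩, h.1⟩
  unfold Kf
  rw [integral_sub (integrableOn_ind _ (measurableSet_U c)) (integrableOn_ind _ (measurableSet_V c)),
    setIntegral_indicator (measurableSet_U c), setIntegral_indicator (measurableSet_V c), hU, hV]
  simp only [integral_const, smul_eq_mul, mul_one, measureReal_def, MeasurableSet.univ,
    Measure.restrict_apply, univ_inter]
  have h1 : (fun j => ((c.1 j : ℝ) + 1) / m) ≤ (1 : Fin d → ℝ) := fun j => fin_div_le _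
  have h0 : (fun j => (c.1 j : ℝ) / m) ≤ (1 : Fin d → ℝ) := fun j =>
    le_trans (div_le_div_of_nonneg_right (by linarith) (by positivity)) (h1 j)
  rw [Real.volume_pi_Ioc_toReal h0, Real.volume_Icc_pi_toReal h1]
  simp

lemma sum_one_sub {m : ℕ} (hm : 0 < m) (a : ℝ) :
    ∑ k : Fin m, (1 - ((k : ℝ) + a) / m) = ((m : ℝ) + 1) / 2 - a := by
  have hm' : (0 : ℝ) < m := by exact_mod_cast hm
  rw [Fin.sum_univ_eq_sum_range (fun k : ℕ => (1 - ((k : ℝ) + a) / m)) m]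
  rw [Finset.sum_sub_distrib, ← Finset.sum_div, Finset.sum_add_distrib]
  have : ∑ i ∈ Finset.range m, (i : ℝ) = m * (m - 1) / 2 := by
    clear hm hm'
    induction m with
    | zero => simp
    | succ n ih => rw [Finset.sum_range_succ, ih]; push_cast; ring
  rw [this]
  simp only [Finset.sum_const, Finset.card_range, nsmul_eq_mul, mul_one]
  field_simp
  ring

lemma sum_integral_Kf {d m : ℕ} (hm : 0 < m) :
    ∑ c : (Fin d → Fin m) × Fin m, ∫ t in Icc (0 : Fin d → ℝ) 1, Kf c t =
      (m : ℝ) * ((((m : ℝ) + 1) / 2) ^ d - (((m : ℝ) + 1) / 2 - 1) ^ d) := by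
  simp_rw [integral_Kf]
  rw [Fintype.sum_prod_type]
  simp only [Finset.sum_const, Finset.card_univ, Fintype.card_fin, nsmul_eq_mul]
  rw [← Finset.mul_sum, Finset.sum_sub_distrib]
  rw [← Fintype.sum_pow (fun k : Fin m => (1 - (k : ℝ) / m)),
    ← Fintype.sum_pow (fun k : Fin m => (1 - ((k : ℝ) + 1) / m)), sum_one_sub hm 1]
  have := sum_one_sub hm 0
  simp only [add_zero, sub_zero] at this
  rw [this]

lemma pow_diff {x : ℝ} (hx : 1 ≤ x) (d : ℕ) : x ^ (d + 1) - (x - 1) ^ (d + 1) ≤ (d + 1) * x ^ d := by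
  induction d with
  | zero => simp
  | succ n ih =>
    have h1 : (x - 1) ^ (n + 1) ≤ x ^ (n + 1) := by
      apply pow_le_pow_left₀ <;> linarith
    have h2 : x * (x ^ (n + 1) - (x - 1) ^ (n + 1)) ≤ x * ((n + 1) * x ^ n) :=
      mul_le_mul_of_nonneg_left ih (by linarith)
    push_cast
    calc x ^ (n + 1 + 1) - (x - 1) ^ (n + 1 + 1)
        = x * (x ^ (n + 1) - (x - 1) ^ (n + 1)) + (x - 1) ^ (n + 1) := by ring
      _ ≤ x * ((n + 1) * x ^ n) + x ^ (n + 1) := add_le_add h2 h1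
      _ = _ := by ring

lemma K_total {n m : ℕ} (hm : 0 < m) :
    (m : ℝ) * ((((m : ℝ) + 1) / 2) ^ (n + 1) - (((m : ℝ) + 1) / 2 - 1) ^ (n + 1)) ≤
      m * ((m : ℝ) + 1) ^ n := by
  have hm' : (1 : ℝ) ≤ m := by exact_mod_cast hm
  gcongr
  refine (pow_diff (by linarith) n).trans ?_
  rw [div_pow]
  have h2 : ((n : ℝ) + 1) ≤ 2 ^ n := by exact_mod_cast Nat.lt_two_pow_self (n := n)
  rw [mul_div_assoc', div_le_iff₀ (by positivity), mul_comm]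
  gcongr

lemma second_moment {d m : ℕ} (hm : 0 < m) (ψ : (Fin d → ℝ) → ℝ) (hmeas : Measurable ψ)
    (L : ℝ) (hL : 0 < L)
    (hψ0 : ∀ z ∈ Icc (0 : Fin d → ℝ) 1, 0 ≤ ψ z)
    (hψL : ∀ z ∈ Icc (0 : Fin d → ℝ) 1, ψ z ≤ L)
    (C : ℝ) (hC : C = ∫ z in Icc (0 : Fin d → ℝ) 1, ψ z) (hCpos : 0 < C)
    (t : Fin d → ℝ) (ht : t ∈ Icc (0 : Fin d → ℝ) 1) {p : ℝ}
    (hp : p = (1 / C) * ∫ z in lowerBox t, ψ z) :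
    ∫ ω, (∑ c, hfun ψ L p t (ω c)) ^ 2 ∂(Measure.pi fun c : (Fin d → Fin m) × Fin m => unif c) =
      ∑ c : (Fin d → Fin m) × Fin m, ProbabilityTheory.variance (hfun ψ L p t) (unif c) := by
  have hpm : p ∈ Icc (0 : ℝ) 1 := by
    rw [hp]; exact p_mem ψ hmeas L hψ0 hψL C hC hCpos t ht
  have hM := measurable_h ψ hmeas L p t
  have hL2 : ∀ c : (Fin d → Fin m) × Fin m, MemLp (hfun ψ L p t) 2 (unif c) := fun c =>
    MemLp.of_bound hM.aestronglyMeasurable 1 (ae_of_all _ fun z => by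
      rw [Real.norm_eq_abs]; exact abs_le.2 (h_bound ψ L p hpm t z))
  have hsum := ProbabilityTheory.variance_sum_pi
    (μ := fun c : (Fin d → Fin m) × Fin m => unif c) (X := fun _ => hfun ψ L p t) hL2
  rw [← hsum]
  have hfe : (∑ c : (Fin d → Fin m) × Fin m,
      fun ω : ((Fin d → Fin m) × Fin m) → (Fin d → ℝ) × ℝ => hfun ψ L p t (ω c)) =
      fun ω => ∑ c, hfun ψ L p t (ω c) := by
    funext ω; simp
  rw [hfe, ProbabilityTheory.variance_of_integral_eq_zero]
  · exact (Finset.measurable_sum _ fun c _ => hM.comp (measurable_pi_apply c)).aemeasurable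
  · rw [integral_finsetSum]
    · have h1 : ∀ c : (Fin d → Fin m) × Fin m,
          ∫ ω, hfun ψ L p t (ω c) ∂(Measure.pi fun c : (Fin d → Fin m) × Fin m => unif c) =
            ∫ z, hfun ψ L p t z ∂(unif c) := fun c =>
        integral_comp_eval (μ := fun c : (Fin d → Fin m) × Fin m => unif c)
          (f := hfun ψ L p t) hM.aestronglyMeasurable
      simp_rw [h1]
      obtain ⟨hi, h0⟩ := mean_zero ψ hmeas L hL hψ0 hψL C hC hCpos t ht hp
      rw [sum_integral_unif hm _ hi, h0, mul_zero]
    · intro c _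
      apply Integrable.of_bound (C := 1)
      · exact (hM.comp (measurable_pi_apply c)).aestronglyMeasurable
      · exact ae_of_all _ fun z => by
          rw [Real.norm_eq_abs]; exact abs_le.2 (h_bound ψ L p hpm t _)

open Classical in
lemma card_eq {d m : ℕ} (A : Set ((Fin d → ℝ) × ℝ))
    (ω : ((Fin d → Fin m) × Fin m) → (Fin d → ℝ) × ℝ) :
    (Nat.card {c : (Fin d → Fin m) × Fin m // ω c ∈ A} : ℝ) =
      ∑ c, A.indicator (fun _ => (1 : ℝ)) (ω c) := by
  rw [Nat.card_eq_fintype_card, Fintype.card_subtype, Finset.card_filter]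
  push_cast
  exact Finset.sum_congr rfl fun c _ => by simp [Set.indicator_apply]

lemma integrand_eq {d m : ℕ} (ψ : (Fin d → ℝ) → ℝ) (L p : ℝ) (t : Fin d → ℝ)
    (ω : ((Fin d → Fin m) × Fin m) → (Fin d → ℝ) × ℝ) :
    (Nat.card {c : (Fin d → Fin m) × Fin m // ω c ∈ graphRegion ψ L} : ℝ) ^ 2 *
      |(1 / (Nat.card {c : (Fin d → Fin m) × Fin m // ω c ∈ graphRegion ψ L} : ℝ))
        * (∑ c, (Jstar ψ L t).indicator (fun _ => (1 : ℝ)) (ω c)) - p| ^ 2 =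
    (∑ c, hfun ψ L p t (ω c)) ^ 2 := by
  have hs : ∑ c, hfun ψ L p t (ω c) = (∑ c, (Jstar ψ L t).indicator (fun _ => (1 : ℝ)) (ω c)) -
      p * (Nat.card {c : (Fin d → Fin m) × Fin m // ω c ∈ graphRegion ψ L} : ℝ) := by
    rw [card_eq, Finset.mul_sum, ← Finset.sum_sub_distrib]
    rfl
  have hle : ∑ c, (Jstar ψ L t).indicator (fun _ => (1 : ℝ)) (ω c) ≤
      (Nat.card {c : (Fin d → Fin m) × Fin m // ω c ∈ graphRegion ψ L} : ℝ) := by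
    rw [card_eq]
    refine Finset.sum_le_sum fun c _ => ?_
    exact indicator_le_indicator_of_subset (fun z hz => hz.2) (fun _ => zero_le_one) _
  have h0 : 0 ≤ ∑ c, (Jstar ψ L t).indicator (fun _ => (1 : ℝ)) (ω c) :=
    Finset.sum_nonneg fun c _ => indicator_nonneg (fun _ _ => zero_le_one) _
  rw [hs]
  generalize (∑ c, (Jstar ψ L t).indicator (fun _ => (1 : ℝ)) (ω c)) = S at *
  generalize (Nat.card {c : (Fin d → Fin m) × Fin m // ω c ∈ graphRegion ψ L} : ℝ) = N at *
  rw [sq_abs, ← mul_pow]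
  by_cases hN : N = 0
  · subst hN
    have : S = 0 := le_antisymm hle h0
    simp [this]
  · congr 1
    field_simp

lemma measurable_G {d m : ℕ} (ψ : (Fin d → ℝ) → ℝ) (hmeas : Measurable ψ) (L : ℝ)
    (p : (Fin d → ℝ) → ℝ) (hp : Measurable p) :
    Measurable (fun q : (((Fin d → Fin m) × Fin m) → (Fin d → ℝ) × ℝ) × (Fin d → ℝ) =>
      (∑ c, hfun ψ L (p q.2) q.2 (q.1 c)) ^ 2) := by
  have hj := measurable_h_joint ψ hmeas L p hp
  have hc : ∀ c : (Fin d → Fin m) × Fin m, Measurable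
      (fun q : (((Fin d → Fin m) × Fin m) → (Fin d → ℝ) × ℝ) × (Fin d → ℝ) =>
      hfun ψ L (p q.2) q.2 (q.1 c)) := by
    intro c
    have hg : Measurable (fun q : (((Fin d → Fin m) × Fin m) → (Fin d → ℝ) × ℝ) × (Fin d → ℝ) =>
        (q.1 c, q.2)) :=
      Measurable.prodMk (Measurable.eval measurable_fst) measurable_snd
    have hfin := hj.comp hg
    simpa only [Function.comp_def] using hfin
  exact (Finset.measurable_sum Finset.univ fun c _ => hc c).pow_const 2

lemma main_bound (d : ℕ)
    (L : ℝ) (hL : 0 < L) (ψ : (Fin d → ℝ) → ℝ) (hmeas : Measurable ψ)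
    (hψ0 : ∀ z ∈ Icc (0 : Fin d → ℝ) 1, 0 ≤ ψ z)
    (hψL : ∀ z ∈ Icc (0 : Fin d → ℝ) 1, ψ z ≤ L)
    (C : ℝ) (hC : C = ∫ z in Icc (0 : Fin d → ℝ) 1, ψ z) (hCpos : 0 < C)
    (m : ℕ) (hm : 0 < m) :
      (∫ ω, ((Nat.card {c : (Fin d → Fin m) × Fin m // ω c ∈ graphRegion ψ L} : ℝ) ^ 2
            * ∫ t in Icc (0 : Fin d → ℝ) 1,
                |(1 / (Nat.card {c : (Fin d → Fin m) × Fin m // ω c ∈ graphRegion ψ L} : ℝ))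
                    * (∑ c, (Jstar ψ L t).indicator (fun _ => (1 : ℝ)) (ω c))
                  - (1 / C) * ∫ z in lowerBox t, ψ z| ^ 2)
          ∂(stratifiedMeasure d m))
        ≤ (m : ℝ) ^ (d + 1) *
          (volume (euclNbhdP (frontier (graphRegion ψ L)) (Real.sqrt (d + 1) / m))).toReal +
          (m : ℝ) * ((((m : ℝ) + 1) / 2) ^ d - (((m : ℝ) + 1) / 2 - 1) ^ d) := by
  classical
  set p : (Fin d → ℝ) → ℝ := fun t => (1 / C) * ∫ z in lowerBox t, ψ z with hpdef
  have hpmeas : Measurable p := measurable_p ψ hmeas C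
  have hμ : stratifiedMeasure d m = Measure.pi fun c : (Fin d → Fin m) × Fin m => unif c := rfl
  rw [hμ]
  have e1 : ∀ (ω : ((Fin d → Fin m) × Fin m) → (Fin d → ℝ) × ℝ) (t : Fin d → ℝ),
      (Nat.card {c : (Fin d → Fin m) × Fin m // ω c ∈ graphRegion ψ L} : ℝ) ^ 2 *
      |(1 / (Nat.card {c : (Fin d → Fin m) × Fin m // ω c ∈ graphRegion ψ L} : ℝ))
        * (∑ c, (Jstar ψ L t).indicator (fun _ => (1 : ℝ)) (ω c)) -
          (1 / C) * ∫ z in lowerBox t, ψ z| ^ 2 =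
    (∑ c, hfun ψ L (p t) t (ω c)) ^ 2 := fun ω t => integrand_eq ψ L (p t) t ω
  have e2 : ∀ ω : ((Fin d → Fin m) × Fin m) → (Fin d → ℝ) × ℝ,
      (Nat.card {c : (Fin d → Fin m) × Fin m // ω c ∈ graphRegion ψ L} : ℝ) ^ 2
            * ∫ t in Icc (0 : Fin d → ℝ) 1,
                |(1 / (Nat.card {c : (Fin d → Fin m) × Fin m // ω c ∈ graphRegion ψ L} : ℝ))
                    * (∑ c, (Jstar ψ L t).indicator (fun _ => (1 : ℝ)) (ω c))
                  - (1 / C) * ∫ z in lowerBox t, ψ z| ^ 2 =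
      ∫ t in Icc (0 : Fin d → ℝ) 1, (∑ c, hfun ψ L (p t) t (ω c)) ^ 2 := by
    intro ω
    rw [← integral_const_mul]
    exact integral_congr_ae (ae_of_all _ fun t => e1 ω t)
  simp only [e2]
  have hfin : IsFiniteMeasure (volume.restrict (Icc (0 : Fin d → ℝ) 1)) :=
    ⟨by rw [Measure.restrict_apply_univ]; exact isCompact_Icc.measure_lt_top⟩
  have hGmeas : Measurable (fun q : (((Fin d → Fin m) × Fin m) → (Fin d → ℝ) × ℝ) × (Fin d → ℝ) =>
      (∑ c, hfun ψ L (p q.2) q.2 (q.1 c)) ^ 2) := by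
    exact measurable_G ψ hmeas L p hpmeas
  have hbd : ∀ t ∈ Icc (0 : Fin d → ℝ) 1, ∀ ω : ((Fin d → Fin m) × Fin m) → (Fin d → ℝ) × ℝ,
      (∑ c, hfun ψ L (p t) t (ω c)) ^ 2 ≤
        (Fintype.card ((Fin d → Fin m) × Fin m) : ℝ) ^ 2 := by
    intro t ht ω
    apply sq_le_sq'
    · have := Finset.sum_le_sum (s := Finset.univ) (f := fun _ => (-1 : ℝ))
        (g := fun c => hfun ψ L (p t) t (ω c)) fun c _ =>
        (h_bound ψ L (p t) (p_mem ψ hmeas L hψ0 hψL C hC hCpos t ht) t (ω c)).1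
      simpa using this
    · have := Finset.sum_le_sum (s := Finset.univ) (g := fun _ => (1 : ℝ))
        (f := fun c => hfun ψ L (p t) t (ω c)) fun c _ =>
        (h_bound ψ L (p t) (p_mem ψ hmeas L hψ0 hψL C hC hCpos t ht) t (ω c)).2
      simpa using this
  have hae : ∀ᵐ q ∂((Measure.pi fun c : (Fin d → Fin m) × Fin m => unif c).prod
      (volume.restrict (Icc (0 : Fin d → ℝ) 1))), q.2 ∈ Icc (0 : Fin d → ℝ) 1 :=
    Measure.quasiMeasurePreserving_snd.ae (ae_restrict_mem measurableSet_Icc)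
  have hGint : Integrable (Function.uncurry
      fun (ω : ((Fin d → Fin m) × Fin m) → (Fin d → ℝ) × ℝ) (t : Fin d → ℝ) =>
      (∑ c, hfun ψ L (p t) t (ω c)) ^ 2)
      ((Measure.pi fun c : (Fin d → Fin m) × Fin m => unif c).prod
      (volume.restrict (Icc (0 : Fin d → ℝ) 1))) := by
    refine Integrable.of_bound ?_ ((Fintype.card ((Fin d → Fin m) × Fin m) : ℝ) ^ 2) ?_
    · exact hGmeas.aestronglyMeasurable
    · filter_upwards [hae] with q hq
      rw [Real.norm_eq_abs]
      simp only [Function.uncurry]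
      rw [abs_of_nonneg (sq_nonneg _)]
      exact hbd q.2 hq q.1
  rw [integral_integral_swap hGint]
  have hBint : ∀ c : (Fin d → Fin m) × Fin m, Integrable (fun t : Fin d → ℝ =>
      (if (gridCubeP c ∩ frontier (graphRegion ψ L)).Nonempty then (1 : ℝ) else 0) + Kf c t)
      (volume.restrict (Icc (0 : Fin d → ℝ) 1)) := fun c =>
    (integrable_const _).add (integrable_Kf c)
  calc _ ≤ ∫ t in Icc (0 : Fin d → ℝ) 1, ∑ c : (Fin d → Fin m) × Fin m,
        ((if (gridCubeP c ∩ frontier (graphRegion ψ L)).Nonempty then (1 : ℝ) else 0) + Kf c t) := by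
        apply setIntegral_mono_on hGint.integral_prod_right
          (integrable_finsetSum _ fun c _ => hBint c) measurableSet_Icc
        intro t ht
        have := second_moment hm ψ hmeas L hL hψ0 hψL C hC hCpos t ht (p := p t) rfl
        simp only [Function.uncurry]
        rw [this]
        exact Finset.sum_le_sum fun c _ => var_bound c ψ hmeas L (p t)
          (p_mem ψ hmeas L hψ0 hψL C hC hCpos t ht) t
    _ = (∑ c : (Fin d → Fin m) × Fin m,
        (if (gridCubeP c ∩ frontier (graphRegion ψ L)).Nonempty then (1 : ℝ) else 0)) +
        ∑ c : (Fin d → Fin m) × Fin m, ∫ t in Icc (0 : Fin d → ℝ) 1, Kf c t := by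
        rw [integral_finsetSum _ fun c _ => hBint c, ← Finset.sum_add_distrib]
        refine Finset.sum_congr rfl fun c _ => ?_
        rw [integral_add (integrable_const _) (integrable_Kf c), integral_const]
        simp [measureReal_def, Real.volume_Icc_pi]
    _ ≤ _ := by
        rw [sum_integral_Kf hm]
        gcongr
        exact count_boundary hm ψ L

lemma eventual_bound (d : ℕ) (hd : 1 ≤ d) (ψ : (Fin d → ℝ) → ℝ) (L : ℝ)
    (hψ0 : ∀ z ∈ Icc (0 : Fin d → ℝ) 1, 0 ≤ ψ z) (MA : ℝ)
    (hMink : HasMinkowskiContentP (graphRegion ψ L) MA) :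
    ∃ m₀ : ℕ, ∀ m : ℕ, m₀ ≤ m → 0 < m ∧ (m : ℝ) ^ (d + 1) *
          (volume (euclNbhdP (frontier (graphRegion ψ L)) (Real.sqrt (d + 1) / m))).toReal +
          (m : ℝ) * ((((m : ℝ) + 1) / 2) ^ d - (((m : ℝ) + 1) / 2 - 1) ^ d) ≤
          3 * Real.sqrt (d + 1) * MA * (m : ℝ) ^ d := by
  have hMA := one_le_content ψ L hψ0 MA hMink
  obtain ⟨n, rfl⟩ : ∃ n, d = n + 1 := ⟨d - 1, by omega⟩
  set r : ℝ := Real.sqrt (((n + 1 : ℕ) : ℝ) + 1) with hr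
  have hr2 : (1.4 : ℝ) ≤ r := by
    apply Real.le_sqrt_of_sq_le
    push_cast
    have : (0 : ℝ) ≤ n := by positivity
    norm_num
    linarith
  have hrpos : 0 < r := by linarith
  have t1 : Tendsto (fun m : ℕ => r / (m : ℝ)) atTop (nhdsWithin 0 (Ioi 0)) := by
    rw [tendsto_nhdsWithin_iff]
    refine ⟨tendsto_const_div_atTop_nhds_zero_nat r, ?_⟩
    filter_upwards [eventually_gt_atTop 0] with m hm
    have : (0 : ℝ) < m := by exact_mod_cast hm
    exact div_pos hrpos this
  have t2 := (hMink.comp t1).eventually (gt_mem_nhds (show MA < 1.1 * MA by linarith))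
  have t3 : Tendsto (fun m : ℕ => (1 + 1 / (m : ℝ)) ^ n) atTop (nhds 1) := by
    have := (tendsto_one_div_atTop_nhds_zero_nat (𝕜 := ℝ)).const_add 1 |>.pow n
    simpa using this
  have t4 := t3.eventually (gt_mem_nhds (show (1 : ℝ) < 1.1 by norm_num))
  obtain ⟨m₀, hm₀⟩ := eventually_atTop.1 (t2.and (t4.and (eventually_gt_atTop 0)))
  refine ⟨m₀, fun m hm => ?_⟩
  obtain ⟨h2, h4, hpos⟩ := hm₀ m hm
  have hm' : (0 : ℝ) < m := by exact_mod_cast hpos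
  refine ⟨hpos, ?_⟩
  simp only [Function.comp] at h2
  rw [div_lt_iff₀ (by positivity)] at h2
  have e1 : (m : ℝ) ^ (n + 1 + 1) *
      (volume (euclNbhdP (frontier (graphRegion ψ L)) (r / m))).toReal ≤
      2.2 * r * MA * (m : ℝ) ^ (n + 1) := by
    calc _ ≤ (m : ℝ) ^ (n + 1 + 1) * (1.1 * MA * (2 * (r / m))) := by gcongr
      _ = _ := by field_simp; ring
  have e2 : (m : ℝ) * ((m : ℝ) + 1) ^ n ≤ 1.1 * (m : ℝ) ^ (n + 1) := by
    have : (m : ℝ) + 1 = m * (1 + 1 / m) := by field_simp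
    rw [this, mul_pow]
    calc (m : ℝ) * ((m : ℝ) ^ n * (1 + 1 / (m : ℝ)) ^ n) = (1 + 1 / (m : ℝ)) ^ n * (m : ℝ) ^ (n + 1) := by
          ring
      _ ≤ _ := by gcongr
  have e3 := K_total (n := n) hpos
  have e4 : 1.1 ≤ 0.8 * r * MA := by nlinarith
  have e5 : 1.1 * (m : ℝ) ^ (n + 1) ≤ 0.8 * r * MA * (m : ℝ) ^ (n + 1) := by gcongr
  linarith

end StratAux

/-- **Expected squared `L₂` discrepancy of the stratified acceptance-rejection sampler**
(the `q = 2` case of Theorem 2 of the paper, with `s = d+1`):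
`E[N² L_{2,N,ψ}²] ≤ 3 √s M_A m^{s-1}` for all large `m`, where the number of accepted
points is `N(ω) = #{c : ω_c ∈ A}` and `∑_c 1_{J_t*}(ω_c) = ∑_n 1_{[0,t)}(y_n)` is the
counting function of the projected accepted points. -/
theorem expected_L2_discrepancy_stratified (d : ℕ) (hd : 1 ≤ d)
    (L : ℝ) (hL : 0 < L) (ψ : (Fin d → ℝ) → ℝ) (hmeas : Measurable ψ)
    (hψ0 : ∀ z ∈ Icc (0 : Fin d → ℝ) 1, 0 ≤ ψ z)
    (hψL : ∀ z ∈ Icc (0 : Fin d → ℝ) 1, ψ z ≤ L)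
    (C : ℝ) (hC : C = ∫ z in Icc (0 : Fin d → ℝ) 1, ψ z) (hCpos : 0 < C)
    (MA : ℝ) (hMApos : 0 < MA) (hMink : HasMinkowskiContentP (graphRegion ψ L) MA) :
    ∃ m₀ : ℕ, ∀ m : ℕ, m₀ ≤ m →
      (∫ ω, ((Nat.card {c : (Fin d → Fin m) × Fin m // ω c ∈ graphRegion ψ L} : ℝ) ^ 2
            * ∫ t in Icc (0 : Fin d → ℝ) 1,
                |(1 / (Nat.card {c : (Fin d → Fin m) × Fin m // ω c ∈ graphRegion ψ L} : ℝ))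
                    * (∑ c, (Jstar ψ L t).indicator (fun _ => (1 : ℝ)) (ω c))
                  - (1 / C) * ∫ z in lowerBox t, ψ z| ^ 2)
          ∂(stratifiedMeasure d m))
        ≤ 3 * Real.sqrt (d + 1) * MA * (m : ℝ) ^ d := by
  obtain ⟨m₀, hm₀⟩ := StratAux.eventual_bound d hd ψ L hψ0 MA hMink
  refine ⟨m₀, fun m hm => ?_⟩
  obtain ⟨hmpos, hb⟩ := hm₀ m hm
  exact (StratAux.main_bound d L hL ψ hmeas hψ0 hψL C hC hCpos m hmpos).trans hb
end
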